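/- arXiv:1709.05031 — 16 statements merged into one kernel-verified Lean document; each statement's English description precedes it below -/
import Mathlib

section
/- Let p ≥ 2 be real, B > 0, c ∈ ℝ, a ∈ ℝ, δ > 0. Suppose φ : (a, a+δ) → ℝ is continuously differentiable with φ(x) > 0 and φ'(x) > 0 for all x ∈ (a, a+δ), satisfies (φ'(x))² = 2B/φ(x)² + c − (2/p)·φ(x)^(p−2) on (a, a+δ), and φ(x) → 0 as x → a⁺. Then φ(x)/√(x−a) → (8B)^{1/4} as x → a⁺, i.e. near its vanishing point φ behaves like √(2√(2B))·√(x−a). -/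
open Filter Set

/-- boundary behavior of compactons at the edge of their support:
φ(x) ~ √(2√(2B))·√(x−a) as x → a⁺, i.e. φ(x)/√(x−a) → (8B)^{1/4}. -/
theorem stmt_1 (p B c a δ : ℝ) (hp : 2 ≤ p) (hB : 0 < B) (hδ : 0 < δ)
    (φ φ' : ℝ → ℝ)
    (hd : ∀ x ∈ Set.Ioo a (a + δ), HasDerivAt φ (φ' x) x)
    (hc' : ContinuousOn φ' (Set.Ioo a (a + δ)))
    (hpos : ∀ x ∈ Set.Ioo a (a + δ), 0 < φ x)
    (hpos' : ∀ x ∈ Set.Ioo a (a + δ), 0 < φ' x)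
    (hODE : ∀ x ∈ Set.Ioo a (a + δ),
      (φ' x) ^ 2 = 2 * B / (φ x) ^ 2 + c - (2 / p) * φ x ^ (p - 2))
    (hlim : Tendsto φ (nhdsWithin a (Set.Ioo a (a + δ))) (nhds 0)) :
    Tendsto (fun x => φ x / Real.sqrt (x - a)) (nhdsWithin a (Set.Ioo a (a + δ)))
      (nhds ((8 * B) ^ ((1 : ℝ) / 4))) := by
  have hab : a < a + δ := by linarith
  have hp0 : (0:ℝ) < p := by linarith
  have hmem : ∀ᶠ x in nhdsWithin a (Set.Ioo a (a + δ)), x ∈ Set.Ioo a (a + δ) :=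
    self_mem_nhdsWithin
  -- the squared product
  have h1 : Tendsto (fun x => 2 * B + c * φ x ^ 2 - (2 / p) * φ x ^ p)
      (nhdsWithin a (Set.Ioo a (a + δ))) (nhds (2 * B)) := by
    have e1 := hlim.pow 2
    have e2 := hlim.rpow_const (p := p) (Or.inr hp0.le)
    rw [Real.zero_rpow hp0.ne'] at e2
    have := (tendsto_const_nhds (x := 2 * B)).add (e1.const_mul c) |>.sub (e2.const_mul (2 / p))
    simpa using this
  have h2 : Tendsto (fun x => 2 * φ x * φ' x / 1)
      (nhdsWithin a (Set.Ioo a (a + δ))) (nhds (2 * Real.sqrt (2 * B))) := by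
    have := (h1.sqrt).const_mul 2
    refine this.congr' ?_
    filter_upwards [hmem] with x hx
    have hx0 := hpos x hx
    have key : 2 * B + c * φ x ^ 2 - (2 / p) * φ x ^ p = (φ x * φ' x) ^ 2 := by
      rw [mul_pow, hODE x hx]
      have : φ x ^ p = φ x ^ (p - 2) * φ x ^ 2 := by
        rw [← Real.rpow_natCast, ← Real.rpow_add hx0]
        norm_num
      rw [this]
      field_simp
    rw [key, Real.sqrt_sq (mul_pos hx0 (hpos' x hx)).le]
    ring
  have h3 : Tendsto (fun x => φ x ^ 2 / (x - a))
      (nhdsWithin a (Set.Ioo a (a + δ))) (nhds (2 * Real.sqrt (2 * B))) := by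
    rw [nhdsWithin_Ioo_eq_nhdsGT hab] at h2 hlim ⊢
    refine HasDerivAt.lhopital_zero_right_on_Ioo hab (f' := fun x => 2 * φ x * φ' x)
      (g' := fun _ => 1) ?_ ?_ ?_ ?_ ?_ h2
    · intro x hx
      have h := (hd x hx).fun_pow 2
      have e : ((2 : ℕ) : ℝ) * φ x ^ (2 - 1) * φ' x = 2 * φ x * φ' x := by norm_num
      rw [e] at h
      exact h
    · intro x hx
      exact (hasDerivAt_id x).sub_const a
    · intro x hx
      exact one_ne_zero
    · simpa using hlim.pow 2
    · have : Tendsto (fun x : ℝ => x - a) (nhds a) (nhds (a - a)) :=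
        (continuous_id.sub continuous_const).tendsto a
      rw [sub_self] at this
      exact this.mono_left nhdsWithin_le_nhds
  have h4 : (8 * B) ^ ((1 : ℝ) / 4) = Real.sqrt (2 * Real.sqrt (2 * B)) := by
    have : 2 * Real.sqrt (2 * B) = Real.sqrt (8 * B) := by
      rw [show 8 * B = 2 ^ 2 * (2 * B) by ring, Real.sqrt_mul (show (0:ℝ) ≤ 2 ^ 2 by norm_num),
        Real.sqrt_sq (by norm_num)]
    rw [this, Real.sqrt_eq_rpow, Real.sqrt_eq_rpow, ← Real.rpow_mul (by positivity)]
    norm_num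
  rw [h4]
  refine h3.sqrt.congr' ?_
  filter_upwards [hmem] with x hx
  rw [Real.sqrt_div (sq_nonneg _), Real.sqrt_sq (hpos x hx).le]
end

section
/- Let c < 1 and B > 0 and set r = √(2B)/(1−c). Define φ(x) = √((c−1)x² + 2B/(1−c)) for |x| < r. Then φ is positive and twice continuously differentiable on (−r, r), and satisfies −c·φ(x) + φ(x)·(φ(x)·φ'(x))' + φ(x) = 0 for all x ∈ (−r, r); moreover φ(x) → 0 as x → ±r. -/
open Filter Set

/-- explicit compacton profile for degenerate KdV with p = 2. -/
theorem stmt_2 (c B : ℝ) (hc : c < 1) (hB : 0 < B)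
    (r : ℝ) (hr : r = Real.sqrt (2 * B) / (1 - c))
    (φ : ℝ → ℝ)
    (hφ : ∀ x, φ x = Real.sqrt ((c - 1) * x ^ 2 + 2 * B / (1 - c))) :
    (∀ x ∈ Set.Ioo (-r) r, 0 < φ x) ∧
    ContDiffOn ℝ 2 φ (Set.Ioo (-r) r) ∧
    (∀ x ∈ Set.Ioo (-r) r,
      -c * φ x + φ x * deriv (fun y => φ y * deriv φ y) x + φ x = 0) ∧
    Tendsto φ (nhdsWithin r (Set.Ioo (-r) r)) (nhds 0) ∧
    Tendsto φ (nhdsWithin (-r) (Set.Ioo (-r) r)) (nhds 0) := by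
  have hd : 0 < 1 - c := by linarith
  have hr2 : 2 * B / (1 - c) = (1 - c) * r ^ 2 := by
    rw [hr, div_pow, Real.sq_sqrt (by linarith)]
    field_simp
  have hf : φ = fun x => Real.sqrt ((1 - c) * (r ^ 2 - x ^ 2)) := by
    funext x
    rw [hφ, hr2]
    congr 1
    ring
  have hpos : ∀ x ∈ Set.Ioo (-r) r, 0 < (1 - c) * (r ^ 2 - x ^ 2) := by
    intro x hx
    apply mul_pos hd
    nlinarith [mul_pos (sub_pos.2 hx.1) (sub_pos.2 hx.2)]
  have hcont : Continuous φ := by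
    rw [hf]
    fun_prop
  have hφpos : ∀ x ∈ Set.Ioo (-r) r, 0 < φ x := by
    intro x hx
    rw [hf]
    exact Real.sqrt_pos.2 (hpos x hx)
  have hprod : ∀ x ∈ Set.Ioo (-r) r, φ x * deriv φ x = (c - 1) * x := by
    intro x hx
    have h1 : HasDerivAt (fun x : ℝ => (1 - c) * (r ^ 2 - x ^ 2)) ((1 - c) * (-(2 * x))) x := by
      have := (((hasDerivAt_pow 2 x).const_sub (r ^ 2)).const_mul (1 - c))
      simpa using this
    have h2 := h1.sqrt (hpos x hx).ne'
    have h3 : 0 < Real.sqrt ((1 - c) * (r ^ 2 - x ^ 2)) := Real.sqrt_pos.2 (hpos x hx)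
    rw [hf, h2.deriv]
    rw [mul_div_assoc', div_eq_iff (by positivity)]
    ring
  refine ⟨hφpos, ?_, ?_, ?_, ?_⟩
  · rw [hf]
    apply ContDiffOn.sqrt
    · fun_prop
    · intro x hx
      exact (hpos x hx).ne'
  · intro x hx
    have he : (fun y => φ y * deriv φ y) =ᶠ[nhds x] fun y => (c - 1) * y := by
      filter_upwards [Ioo_mem_nhds hx.1 hx.2] with y hy using hprod y hy
    have h4 : HasDerivAt (fun y : ℝ => (c - 1) * y) (c - 1) x := by
      simpa using (hasDerivAt_id x).const_mul (c - 1)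
    rw [he.deriv_eq, h4.deriv]
    ring
  · have h := (hcont.tendsto r).mono_left (nhdsWithin_le_nhds (s := Set.Ioo (-r) r))
    have h0 : φ r = 0 := by simp [hf]
    rwa [h0] at h
  · have h := (hcont.tendsto (-r)).mono_left (nhdsWithin_le_nhds (s := Set.Ioo (-r) r))
    have h0 : φ (-r) = 0 := by simp [hf]
    rwa [h0] at h
end

section
/- Let c > 0 and B ∈ ℝ with −c² < 4B < 0, and set Z = √(4B + c²), so 0 < Z < c. Then φ(x) = √(c + Z·cos(√2·x)) is well-defined, positive, and twice continuously differentiable on all of ℝ, is periodic with period √2·π, and satisfies −c·φ(x) + φ(x)·(φ(x)·φ'(x))' + φ(x)³ = 0 for all x ∈ ℝ. -/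
/-- explicit periodic traveling-wave profiles for degenerate KdV with p = 4. -/
theorem stmt_3 (c B : ℝ) (hc : 0 < c) (hB1 : -c ^ 2 < 4 * B) (hB2 : 4 * B < 0)
    (Z : ℝ) (hZ : Z = Real.sqrt (4 * B + c ^ 2))
    (φ : ℝ → ℝ)
    (hφ : ∀ x, φ x = Real.sqrt (c + Z * Real.cos (Real.sqrt 2 * x))) :
    (0 < Z ∧ Z < c) ∧
    (∀ x, 0 < c + Z * Real.cos (Real.sqrt 2 * x)) ∧
    (∀ x, 0 < φ x) ∧
    ContDiff ℝ 2 φ ∧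
    Function.Periodic φ (Real.sqrt 2 * Real.pi) ∧
    (∀ x, -c * φ x + φ x * deriv (fun y => φ y * deriv φ y) x + (φ x) ^ 3 = 0) := by
  have h2 : Real.sqrt 2 * Real.sqrt 2 = 2 := Real.mul_self_sqrt (by norm_num)
  have hZ0 : 0 < Z := by
    rw [hZ]
    exact Real.sqrt_pos.mpr (by linarith)
  have hZc : Z < c := by
    rw [hZ, Real.sqrt_lt' hc]
    linarith
  have hpos : ∀ x, 0 < c + Z * Real.cos (Real.sqrt 2 * x) := by
    intro x
    have := Real.neg_one_le_cos (Real.sqrt 2 * x)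
    nlinarith
  have hφe : φ = fun x => Real.sqrt (c + Z * Real.cos (Real.sqrt 2 * x)) := funext hφ
  have hφpos : ∀ x, 0 < φ x := fun x => by
    rw [hφ x]
    exact Real.sqrt_pos.mpr (hpos x)
  have hsq : ∀ x, φ x ^ 2 = c + Z * Real.cos (Real.sqrt 2 * x) := fun x => by
    rw [hφ x]
    exact Real.sq_sqrt (hpos x).le
  have hlin : ∀ x : ℝ, HasDerivAt (fun y : ℝ => Real.sqrt 2 * y) (Real.sqrt 2) x := fun x => by
    simpa using (hasDerivAt_id x).const_mul (Real.sqrt 2)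
  have hd : ∀ x, HasDerivAt φ (Z * (-Real.sin (Real.sqrt 2 * x) * Real.sqrt 2) / (2 * φ x)) x := by
    intro x
    have h1 := ((((hlin x).cos).const_mul Z).const_add c).sqrt (hpos x).ne'
    rw [← hφ x, ← hφe] at h1
    exact h1
  have hprod : (fun y => φ y * deriv φ y)
      = fun y => (-(Z * Real.sqrt 2) / 2) * Real.sin (Real.sqrt 2 * y) := by
    funext y
    rw [(hd y).deriv]
    have := (hφpos y).ne'
    field_simp
  refine ⟨⟨hZ0, hZc⟩, hpos, hφpos, ?_, ?_, ?_⟩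
  · rw [hφe]
    refine ContDiff.sqrt ?_ (fun x => (hpos x).ne')
    exact contDiff_const.add (contDiff_const.mul
      (Real.contDiff_cos.comp (contDiff_const.mul contDiff_id)))
  · intro x
    rw [hφ, hφ, mul_add, ← mul_assoc (Real.sqrt 2), h2, Real.cos_add_two_pi]
  · intro x
    rw [hprod, (((hlin x).sin).const_mul (-(Z * Real.sqrt 2) / 2)).deriv]
    linear_combination φ x * hsq x
      - φ x * Z * Real.cos (Real.sqrt 2 * x) / 2 * h2
end

section
/- Let B ≥ 0 and c ∈ ℝ satisfy B > 0, or B = 0 and c > 0. Set Z = √(4B + c²) and let x₀ ∈ (0, π/√2] be the least positive solution of cos(√2·x₀) = −c/Z. Define φ(x) = √(c + Z·cos(√2·x)). Then: (i) c + Z·cos(√2·x) > 0 for all x ∈ (−x₀, x₀), so φ is positive and smooth there; (ii) φ(x) → 0 as x → ±x₀; (iii) −c·φ(x) + φ(x)·(φ(x)·φ'(x))' + φ(x)³ = 0 for all x ∈ (−x₀, x₀); (iv) (φ(x)·φ'(x))² = 2B + c·φ(x)² − (1/2)·φ(x)⁴ for all x ∈ (−x₀, x₀). -/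
open Filter Set

/-- the explicit compacton profile Φ_{B,c} of degenerate KdV with p = 4. -/
theorem stmt_4 (B c : ℝ) (hB : 0 ≤ B) (hcase : 0 < B ∨ (B = 0 ∧ 0 < c))
    (Z : ℝ) (hZ : Z = Real.sqrt (4 * B + c ^ 2))
    (x₀ : ℝ) (hx₀pos : 0 < x₀) (hx₀le : x₀ ≤ Real.pi / Real.sqrt 2)
    (hx₀ : Real.cos (Real.sqrt 2 * x₀) = -c / Z)
    (hleast : ∀ y, 0 < y → Real.cos (Real.sqrt 2 * y) = -c / Z → x₀ ≤ y)
    (φ : ℝ → ℝ)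
    (hφ : ∀ x, φ x = Real.sqrt (c + Z * Real.cos (Real.sqrt 2 * x))) :
    (∀ x ∈ Set.Ioo (-x₀) x₀, 0 < c + Z * Real.cos (Real.sqrt 2 * x)) ∧
    ContDiffOn ℝ (⊤ : ℕ∞) φ (Set.Ioo (-x₀) x₀) ∧
    Tendsto φ (nhdsWithin x₀ (Set.Ioo (-x₀) x₀)) (nhds 0) ∧
    Tendsto φ (nhdsWithin (-x₀) (Set.Ioo (-x₀) x₀)) (nhds 0) ∧
    (∀ x ∈ Set.Ioo (-x₀) x₀,
      -c * φ x + φ x * deriv (fun y => φ y * deriv φ y) x + (φ x) ^ 3 = 0) ∧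
    (∀ x ∈ Set.Ioo (-x₀) x₀,
      (φ x * deriv φ x) ^ 2 = 2 * B + c * (φ x) ^ 2 - (1 / 2) * (φ x) ^ 4) := by
  have hZpos : 0 < Z := by
    rw [hZ]; apply Real.sqrt_pos.mpr
    rcases hcase with h | ⟨h, h'⟩
    · positivity
    · rw [h]; positivity
  have hZ2 : Z ^ 2 = 4 * B + c ^ 2 := by
    rw [hZ]; exact Real.sq_sqrt (by positivity)
  have hs : 0 < Real.sqrt 2 := by positivity
  have hs2 : Real.sqrt 2 ^ 2 = 2 := Real.sq_sqrt (by norm_num)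
  have hend : c + Z * Real.cos (Real.sqrt 2 * x₀) = 0 := by
    rw [hx₀]; field_simp; ring
  have hpos : ∀ x ∈ Set.Ioo (-x₀) x₀, 0 < c + Z * Real.cos (Real.sqrt 2 * x) := by
    intro x hx
    have hax : |x| < x₀ := abs_lt.mpr hx
    have h1 : Real.cos (Real.sqrt 2 * x₀) < Real.cos (Real.sqrt 2 * |x|) := by
      apply Real.cos_lt_cos_of_nonneg_of_le_pi
      · positivity
      · rw [le_div_iff₀ hs] at hx₀le; linarith
      · exact mul_lt_mul_of_pos_left hax hs
    have h2 : Real.cos (Real.sqrt 2 * |x|) = Real.cos (Real.sqrt 2 * x) := by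
      rw [← Real.cos_abs (Real.sqrt 2 * x), abs_mul, abs_of_pos hs]
    rw [h2] at h1
    have := mul_lt_mul_of_pos_left h1 hZpos
    linarith
  have hφe : φ = fun x => Real.sqrt (c + Z * Real.cos (Real.sqrt 2 * x)) := funext hφ
  have hcont : Continuous φ := by rw [hφe]; fun_prop
  have hu : ∀ x, HasDerivAt (fun x => c + Z * Real.cos (Real.sqrt 2 * x))
      (Z * (-Real.sin (Real.sqrt 2 * x) * Real.sqrt 2)) x := by
    intro x
    have h1 : HasDerivAt (fun x : ℝ => Real.sqrt 2 * x) (Real.sqrt 2) x := by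
      simpa using (hasDerivAt_id x).const_mul (Real.sqrt 2)
    exact (h1.cos.const_mul Z).const_add c
  have hprod : ∀ x ∈ Set.Ioo (-x₀) x₀,
      φ x * deriv φ x = -(Real.sqrt 2 / 2 * Z) * Real.sin (Real.sqrt 2 * x) := by
    intro x hx
    have hp := hpos x hx
    have hd := ((hu x).sqrt hp.ne').deriv
    rw [← hφe] at hd
    have hq := Real.sqrt_pos.mpr hp
    rw [hd, hφ]
    field_simp
  have hsq : ∀ x ∈ Set.Ioo (-x₀) x₀, φ x ^ 2 = c + Z * Real.cos (Real.sqrt 2 * x) := by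
    intro x hx
    rw [hφ]; exact Real.sq_sqrt (hpos x hx).le
  refine ⟨hpos, ?_, ?_, ?_, ?_, ?_⟩
  · rw [hφe]
    apply ContDiffOn.sqrt
    · apply ContDiff.contDiffOn; fun_prop
    · exact fun x hx => (hpos x hx).ne'
  · have h0 : φ x₀ = 0 := by rw [hφ, hend, Real.sqrt_zero]
    have := (hcont.tendsto x₀).mono_left (nhdsWithin_le_nhds (s := Set.Ioo (-x₀) x₀))
    rwa [h0] at this
  · have h0 : φ (-x₀) = 0 := by rw [hφ, mul_neg, Real.cos_neg, hend, Real.sqrt_zero]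
    have := (hcont.tendsto (-x₀)).mono_left (nhdsWithin_le_nhds (s := Set.Ioo (-x₀) x₀))
    rwa [h0] at this
  · intro x hx
    have he : (fun y => φ y * deriv φ y) =ᶠ[nhds x]
        fun y => -(Real.sqrt 2 / 2 * Z) * Real.sin (Real.sqrt 2 * y) := by
      filter_upwards [isOpen_Ioo.mem_nhds hx] with y hy using hprod y hy
    have h1 : HasDerivAt (fun x : ℝ => Real.sqrt 2 * x) (Real.sqrt 2) x := by
      simpa using (hasDerivAt_id x).const_mul (Real.sqrt 2)
    rw [he.deriv_eq, (h1.sin.const_mul (-(Real.sqrt 2 / 2 * Z))).deriv]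
    linear_combination φ x * hsq x hx - φ x * Z * Real.cos (Real.sqrt 2 * x) / 2 * hs2
  · intro x hx
    have h4 : φ x ^ 4 = (φ x ^ 2) ^ 2 := by ring
    rw [hprod x hx, h4, hsq x hx]
    have hsc := Real.sin_sq_add_cos_sq (Real.sqrt 2 * x)
    linear_combination Z ^ 2 * Real.sin (Real.sqrt 2 * x) ^ 2 / 4 * hs2 + Z ^ 2 / 2 * hsc + hZ2 / 2
end

section
/- Let p ≥ 2 be real, c, B ∈ ℝ, X > 0. Suppose φ : ℝ → ℝ is continuous, φ(x) = 0 for |x| ≥ X, φ is positive and twice continuously differentiable on (−X, X), φ·φ' is bounded on (−X, X), and on (−X, X) it satisfies −c·φ + φ·(φφ')' + φ^{p−1} = 0. Then c·∫φ² dx + 2·∫(φφ')² dx − ∫φ^p dx = 0 (all integrals over ℝ, equivalently over (−X,X)). -/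
open MeasureTheory Set

/-- energy identity for compactly supported traveling-wave profiles
of the degenerate KdV equation. -/
theorem stmt_6 (p c B X : ℝ) (hp : 2 ≤ p) (hX : 0 < X)
    (φ φ' φ'' g' : ℝ → ℝ)
    (hcont : Continuous φ)
    (hzero : ∀ x, X ≤ |x| → φ x = 0)
    (hpos : ∀ x ∈ Set.Ioo (-X) X, 0 < φ x)
    (hd1 : ∀ x ∈ Set.Ioo (-X) X, HasDerivAt φ (φ' x) x)
    (hd2 : ∀ x ∈ Set.Ioo (-X) X, HasDerivAt φ' (φ'' x) x)
    (hc2 : ContinuousOn φ'' (Set.Ioo (-X) X))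
    (hbdd : ∃ M, ∀ x ∈ Set.Ioo (-X) X, |φ x * φ' x| ≤ M)
    (hg : ∀ x ∈ Set.Ioo (-X) X, HasDerivAt (fun y => φ y * φ' y) (g' x) x)
    (hODE : ∀ x ∈ Set.Ioo (-X) X, -c * φ x + φ x * g' x + φ x ^ (p - 1) = 0) :
    c * (∫ x in Set.Ioo (-X) X, (φ x) ^ 2)
      + 2 * (∫ x in Set.Ioo (-X) X, (φ x * φ' x) ^ 2)
      - (∫ x in Set.Ioo (-X) X, φ x ^ p) = 0 := by
  obtain ⟨M, hM⟩ := hbdd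
  have hM0 : 0 ≤ M := (abs_nonneg _).trans (hM 0 ⟨by linarith, hX⟩)
  have hout : ∀ x, x ∉ Set.Ioo (-X) X → φ x = 0 := by
    intro x hx
    apply hzero
    by_contra h
    exact hx (abs_lt.mp (not_le.mp h))
  have hFb : ∀ x, ‖φ x ^ 2 * (φ x * φ' x)‖ ≤ φ x ^ 2 * M := by
    intro x
    rw [Real.norm_eq_abs, abs_mul, abs_of_nonneg (sq_nonneg _)]
    by_cases hx : x ∈ Set.Ioo (-X) X
    · exact mul_le_mul_of_nonneg_left (hM x hx) (sq_nonneg _)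
    · simp [hout x hx]
  have hFd : ∀ x ∈ Set.Ioo (-X) X, HasDerivAt (fun y => φ y ^ 2 * (φ y * φ' y))
      (c * φ x ^ 2 + 2 * (φ x * φ' x) ^ 2 - φ x ^ p) x := by
    intro x hx
    have h := ((hd1 x hx).fun_pow 2).fun_mul (hg x hx)
    refine h.congr_deriv ?_
    have h1 : φ x ^ p = φ x ^ (p - 1) * φ x := by
      rw [← Real.rpow_add_one (hpos x hx).ne']
      congr 1
      ring
    have h2 := hODE x hx
    rw [h1]
    push_cast
    linear_combination (φ x) * h2
  have hFc : Continuous (fun y => φ y ^ 2 * (φ y * φ' y)) := by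
    rw [continuous_iff_continuousAt]
    intro x
    by_cases hx : x ∈ Set.Ioo (-X) X
    · exact (hFd x hx).continuousAt
    · have h0 := hout x hx
      have ht : Filter.Tendsto (fun y => φ y ^ 2 * M) (nhds x) (nhds 0) := by
        have : Continuous (fun y => φ y ^ 2 * M) := by fun_prop
        simpa [h0] using this.tendsto x
      have := squeeze_zero_norm hFb ht
      simpa [ContinuousAt, h0] using this
  have i1 : IntegrableOn (fun x => φ x ^ 2) (Set.Ioo (-X) X) :=
    ((hcont.pow 2).integrableOn_Icc).mono_set Set.Ioo_subset_Icc_self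
  have i3 : IntegrableOn (fun x => φ x ^ p) (Set.Ioo (-X) X) :=
    ((hcont.rpow_const (fun x => Or.inr (by linarith))).integrableOn_Icc).mono_set
      Set.Ioo_subset_Icc_self
  have i2 : IntegrableOn (fun x => (φ x * φ' x) ^ 2) (Set.Ioo (-X) X) := by
    have hc : ContinuousOn (fun x => (φ x * φ' x) ^ 2) (Set.Ioo (-X) X) :=
      fun x hx => ((hg x hx).continuousAt.pow 2).continuousWithinAt
    refine IntegrableOn.of_bound (by simp)
      (hc.aestronglyMeasurable measurableSet_Ioo) (M ^ 2) ?_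
    filter_upwards [ae_restrict_mem measurableSet_Ioo] with x hx
    rw [Real.norm_eq_abs, abs_pow]
    exact pow_le_pow_left₀ (abs_nonneg _) (hM x hx) 2
  have i12 : IntegrableOn (fun x => c * φ x ^ 2 + 2 * (φ x * φ' x) ^ 2) (Set.Ioo (-X) X) :=
    (i1.const_mul c).add (i2.const_mul 2)
  have hI : IntegrableOn (fun x => c * φ x ^ 2 + 2 * (φ x * φ' x) ^ 2 - φ x ^ p)
      (Set.Ioo (-X) X) := i12.sub i3
  have hle : -X ≤ X := by linarith
  have key := intervalIntegral.integral_eq_sub_of_hasDerivAt_of_le hle hFc.continuousOn hFd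
    ((intervalIntegrable_iff_integrableOn_Ioo_of_le hle).2 hI)
  rw [intervalIntegral.integral_of_le hle, integral_Ioc_eq_integral_Ioo] at key
  rw [integral_sub i12 i3, integral_add (i1.const_mul c) (i2.const_mul 2),
    integral_const_mul, integral_const_mul] at key
  rw [key]
  simp [hout X (by simp), hout (-X) (by simp)]
end

section
/- Let p ≥ 2 be real, c, B ∈ ℝ, X > 0. Suppose φ : ℝ → ℝ is continuous, φ(x) = 0 for |x| ≥ X, φ is positive and twice continuously differentiable on (−X, X), φ·φ' is bounded on (−X, X), and on (−X, X) it satisfies both −c·φ + φ·(φφ')' + φ^{p−1} = 0 and −(c/2)·φ² + (1/2)·(φφ')² + (1/p)·φ^p = B. Then H(φ) = c·((p−8)/(2p+8))·M(φ) + ((p−4)/(p+4))·2·B·X, where H(φ) = (1/2)∫(φφ')² dx − (1/p)∫φ^p dx and M(φ) = ∫φ² dx. -/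
open MeasureTheory Set

/-- the relation H(Φ) = c·((p−8)/(2p+8))·M(Φ) + ((p−4)/(p+4))·2·B·X for
compacton traveling-wave profiles of the degenerate KdV equation, where
H(φ) = (1/2)∫(φφ')² − (1/p)∫φ^p and M(φ) = ∫φ². -/
theorem stmt_8 (p c B X : ℝ) (hp : 2 ≤ p) (hX : 0 < X)
    (φ φ' φ'' g' : ℝ → ℝ)
    (hcont : Continuous φ)
    (hzero : ∀ x, X ≤ |x| → φ x = 0)
    (hpos : ∀ x ∈ Set.Ioo (-X) X, 0 < φ x)
    (hd1 : ∀ x ∈ Set.Ioo (-X) X, HasDerivAt φ (φ' x) x)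
    (hd2 : ∀ x ∈ Set.Ioo (-X) X, HasDerivAt φ' (φ'' x) x)
    (hc2 : ContinuousOn φ'' (Set.Ioo (-X) X))
    (hbdd : ∃ M, ∀ x ∈ Set.Ioo (-X) X, |φ x * φ' x| ≤ M)
    (hg : ∀ x ∈ Set.Ioo (-X) X, HasDerivAt (fun y => φ y * φ' y) (g' x) x)
    (hODE : ∀ x ∈ Set.Ioo (-X) X, -c * φ x + φ x * g' x + φ x ^ (p - 1) = 0)
    (hFI : ∀ x ∈ Set.Ioo (-X) X,
      -(c / 2) * (φ x) ^ 2 + (1 / 2) * (φ x * φ' x) ^ 2 + (1 / p) * φ x ^ p = B) :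
    (1 / 2) * (∫ x in Set.Ioo (-X) X, (φ x * φ' x) ^ 2)
      - (1 / p) * (∫ x in Set.Ioo (-X) X, φ x ^ p)
      = c * ((p - 8) / (2 * p + 8)) * (∫ x in Set.Ioo (-X) X, (φ x) ^ 2)
        + ((p - 4) / (p + 4)) * 2 * B * X := by
  have hp0 : 0 < p := by linarith
  have hcP : Continuous (fun x => φ x ^ p) := hcont.rpow_const (fun x => Or.inr hp0.le)
  have hcM : Continuous (fun x => φ x ^ 2) := hcont.pow 2
  have hle : -X ≤ X := by linarith
  have key : ∀ a b d : ℝ, (∫ x in (-X)..X, (a + b * φ x ^ 2 + d * φ x ^ p))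
      = a * (2 * X) + b * (∫ x in (-X)..X, φ x ^ 2) + d * (∫ x in (-X)..X, φ x ^ p) := by
    intro a b d
    have h1 : IntervalIntegrable (fun x => φ x ^ 2) volume (-X) X := hcM.intervalIntegrable _ _
    have h2 : IntervalIntegrable (fun x => φ x ^ p) volume (-X) X := hcP.intervalIntegrable _ _
    rw [intervalIntegral.integral_add (intervalIntegrable_const.add (h1.const_mul b))
      (h2.const_mul d), intervalIntegral.integral_add intervalIntegrable_const (h1.const_mul b),
      intervalIntegral.integral_const_mul, intervalIntegral.integral_const_mul,
      intervalIntegral.integral_const, smul_eq_mul]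
    ring
  have hset : ∀ f : ℝ → ℝ, (∫ x in Set.Ioo (-X) X, f x) = ∫ x in (-X)..X, f x := by
    intro f
    rw [intervalIntegral.integral_of_le hle, integral_Ioc_eq_integral_Ioo]
  have hsq : ∀ x ∈ Set.Ioo (-X) X,
      (φ x * φ' x) ^ 2 = 2 * B + c * φ x ^ 2 + (-(2 / p)) * φ x ^ p := by
    intro x hx
    have := hFI x hx
    linear_combination 2 * this
  have hG : (∫ x in Set.Ioo (-X) X, (φ x * φ' x) ^ 2)
      = 2 * B * (2 * X) + c * (∫ x in (-X)..X, φ x ^ 2)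
        + (-(2 / p)) * (∫ x in (-X)..X, φ x ^ p) := by
    rw [setIntegral_congr_fun measurableSet_Ioo hsq, hset, key]
  obtain ⟨K, hK⟩ := hbdd
  have hout : ∀ x, x ∉ Set.Ioo (-X) X → φ x = 0 := by
    intro x hx
    apply hzero
    by_contra h
    push Not at h
    exact hx (abs_lt.mp h)
  have hbF : ∀ x, |φ x ^ 2 * (φ x * φ' x)| ≤ φ x ^ 2 * K := by
    intro x
    by_cases hx : x ∈ Set.Ioo (-X) X
    · rw [abs_mul, abs_of_nonneg (sq_nonneg (φ x))]
      exact mul_le_mul_of_nonneg_left (hK x hx) (sq_nonneg _)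
    · simp [hout x hx]
  have hFd : ∀ x ∈ Set.Ioo (-X) X, HasDerivAt (fun y => φ y ^ 2 * (φ y * φ' y))
      (4 * B + (3 * c) * φ x ^ 2 + (-(4 / p) - 1) * φ x ^ p) x := by
    intro x hx
    have h := ((hd1 x hx).pow 2).mul (hg x hx)
    refine h.congr_deriv ?_
    have h1 := hsq x hx
    have h2 := hODE x hx
    have h3 : φ x ^ p = φ x * φ x ^ (p - 1) := by
      rw [Real.rpow_sub_one (hpos x hx).ne']
      field_simp [(hpos x hx).ne']
    simp only [Pi.pow_apply]
    push_cast
    linear_combination 2 * h1 + φ x * h2 + h3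
  have hFc : ContinuousOn (fun y => φ y ^ 2 * (φ y * φ' y)) (Set.Icc (-X) X) := by
    intro x _
    apply ContinuousAt.continuousWithinAt
    by_cases hx : x ∈ Set.Ioo (-X) X
    · exact (hFd x hx).continuousAt
    · have h0 := hout x hx
      unfold ContinuousAt
      have ht : Filter.Tendsto (fun y => φ y ^ 2 * K) (nhds x) (nhds 0) := by
        have hc : Continuous (fun y => φ y ^ 2 * K) := by fun_prop
        have := hc.tendsto x
        simpa [h0] using this
      have := squeeze_zero_norm (f := fun y => φ y ^ 2 * (φ y * φ' y)) hbF ht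
      simpa [h0] using this
  have hI : (∫ x in (-X)..X, (4 * B + (3 * c) * φ x ^ 2 + (-(4 / p) - 1) * φ x ^ p)) = 0 := by
    rw [intervalIntegral.integral_eq_sub_of_hasDerivAt_of_le hle hFc hFd]
    · have h1 : φ X = 0 := hout X (by simp)
      have h2 : φ (-X) = 0 := hout (-X) (by simp)
      simp [h1, h2]
    · apply Continuous.intervalIntegrable
      fun_prop
  rw [key] at hI
  rw [hG, hset, hset]
  generalize (∫ x in (-X)..X, φ x ^ 2) = M at *
  generalize (∫ x in (-X)..X, φ x ^ p) = P at *
  have hp4 : p + 4 ≠ 0 := by linarith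
  have hP : P = p * (8 * B * X + 3 * c * M) / (p + 4) := by
    field_simp at hI ⊢
    linarith
  rw [hP, show 2 * p + 8 = 2 * (p + 4) by ring]
  field_simp
  ring
end

section
/- Let B ≥ 0 and c ∈ ℝ satisfy B > 0, or B = 0 and c > 0. Set Z = √(4B + c²), let x₀ ∈ (0, π/√2] be the least positive solution of cos(√2·x₀) = −c/Z, and let Φ(x) = √(c + Z·cos(√2·x)) for |x| ≤ x₀ and Φ(x) = 0 otherwise. Then M(Φ) = ∫Φ² dx = 2c·x₀ + 2√2·√B, and H(Φ) = (1/2)∫(ΦΦ')² dx − (1/4)∫Φ⁴ dx = −(c/4)·(2c·x₀ + 2√2·√B) = −(c/4)·M(Φ). -/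
open MeasureTheory

lemma aux_int (a : ℝ) (ha : 0 < a) (F g G : ℝ → ℝ) (hg : Continuous g)
    (hG : ∀ x, HasDerivAt G (g x) x) (h1 : ∀ x, |x| < a → F x = g x)
    (h2 : ∀ x, a < |x| → F x = 0) : (∫ x, F x) = G a - G (-a) := by
  rw [← intervalIntegral.integral_eq_sub_of_hasDerivAt (fun x _ => hG x)
    (hg.intervalIntegrable _ _), intervalIntegral.integral_of_le (by linarith),
    integral_Ioc_eq_integral_Ioo, ← integral_indicator measurableSet_Ioo]
  apply integral_congr_ae
  have e1 : ∀ᵐ x : ℝ, x ≠ a := by simp [ae_iff, measure_singleton]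
  have e2 : ∀ᵐ x : ℝ, x ≠ -a := by simp [ae_iff, measure_singleton]
  filter_upwards [e1, e2] with x hx1 hx2
  by_cases hx : x ∈ Set.Ioo (-a) a
  · rw [Set.indicator_of_mem hx]
    exact h1 x (abs_lt.2 hx)
  · rw [Set.indicator_of_notMem hx]
    apply h2
    by_contra hcon
    have h3 := abs_le.1 (not_lt.1 hcon)
    exact hx ⟨lt_of_le_of_ne h3.1 (Ne.symm hx2), lt_of_le_of_ne h3.2 hx1⟩

/-- mass and Hamiltonian of the explicit p = 4 compacton Φ_{B,c}:
M(Φ) = 2c·x₀ + 2√2·√B and H(Φ) = −(c/4)·M(Φ). -/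
theorem stmt_9 (B c : ℝ) (hB : 0 ≤ B) (hcase : 0 < B ∨ (B = 0 ∧ 0 < c))
    (Z : ℝ) (hZ : Z = Real.sqrt (4 * B + c ^ 2))
    (x₀ : ℝ) (hx₀pos : 0 < x₀) (hx₀le : x₀ ≤ Real.pi / Real.sqrt 2)
    (hx₀ : Real.cos (Real.sqrt 2 * x₀) = -c / Z)
    (hleast : ∀ y, 0 < y → Real.cos (Real.sqrt 2 * y) = -c / Z → x₀ ≤ y)
    (Φ : ℝ → ℝ)
    (hΦ : ∀ x, Φ x = if |x| ≤ x₀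
      then Real.sqrt (c + Z * Real.cos (Real.sqrt 2 * x)) else 0) :
    (∫ x, (Φ x) ^ 2) = 2 * c * x₀ + 2 * Real.sqrt 2 * Real.sqrt B ∧
    (1 / 2) * (∫ x, (Φ x * deriv Φ x) ^ 2) - (1 / 4) * (∫ x, (Φ x) ^ 4)
      = -(c / 4) * (2 * c * x₀ + 2 * Real.sqrt 2 * Real.sqrt B) := by
  have hpos : 0 < 4 * B + c ^ 2 := by
    rcases hcase with h | ⟨h, h'⟩ <;> positivity
  have hZpos : 0 < Z := by rw [hZ]; exact Real.sqrt_pos.2 hpos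
  have hZ2 : Z ^ 2 = 4 * B + c ^ 2 := by rw [hZ]; exact Real.sq_sqrt hpos.le
  clear hleast hcase hZ
  have hs2 : Real.sqrt 2 ^ 2 = 2 := Real.sq_sqrt (by norm_num)
  have hspos : 0 < Real.sqrt 2 := Real.sqrt_pos.2 (by norm_num)
  set s := Real.sqrt 2 with hs
  have hle : s * x₀ ≤ Real.pi := by
    rw [le_div_iff₀ hspos] at hx₀le; linarith
  have hZc : Z * Real.cos (s * x₀) = -c := by rw [hx₀]; field_simp
  have hsin0 : 0 ≤ Real.sin (s * x₀) :=
    Real.sin_nonneg_of_nonneg_of_le_pi (by positivity) hle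
  have hZs : Z * Real.sin (s * x₀) = 2 * Real.sqrt B := by
    have h1 := Real.sin_sq_add_cos_sq (s * x₀)
    have h2 : (Z * Real.sin (s * x₀)) ^ 2 = (2 * Real.sqrt B) ^ 2 := by
      rw [mul_pow, mul_pow, Real.sq_sqrt hB]
      have : (Z * Real.cos (s * x₀)) ^ 2 = c ^ 2 := by rw [hZc]; ring
      nlinarith
    exact (pow_left_inj₀ (by positivity) (by positivity) two_ne_zero).1 h2
  have hgt : ∀ x, |x| < x₀ → 0 < c + Z * Real.cos (s * x) := by
    intro x hx
    have h1 : Real.cos (s * x₀) < Real.cos (s * |x|) :=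
      Real.cos_lt_cos_of_nonneg_of_le_pi (by positivity) hle
        (mul_lt_mul_of_pos_left hx hspos)
    have h2 : Real.cos (s * |x|) = Real.cos (s * x) := by
      rw [← Real.cos_abs (s * x), abs_mul, abs_of_pos hspos]
    rw [h2] at h1
    have := mul_lt_mul_of_pos_left h1 hZpos
    linarith
  have hin : ∀ x, |x| < x₀ → Φ x = Real.sqrt (c + Z * Real.cos (s * x)) := by
    intro x hx; rw [hΦ, if_pos hx.le]
  have hout : ∀ x, x₀ < |x| → Φ x = 0 := by
    intro x hx; rw [hΦ, if_neg (not_le.2 hx)]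
  have hdsin : ∀ x, HasDerivAt (fun x => Real.sin (s * x)) (Real.cos (s * x) * s) x := by
    intro x
    have := ((hasDerivAt_id x).const_mul s).sin
    simpa using this
  have hdcos : ∀ x, HasDerivAt (fun x => Real.cos (s * x)) (-Real.sin (s * x) * s) x := by
    intro x
    have := ((hasDerivAt_id x).const_mul s).cos
    simpa using this
  have hder : ∀ x, |x| < x₀ →
      (Φ x * deriv Φ x) ^ 2 = Z ^ 2 / 2 * Real.sin (s * x) ^ 2 := by
    intro x hx
    have hp := hgt x hx
    have h1 : HasDerivAt (fun x => Real.sqrt (c + Z * Real.cos (s * x)))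
        ((Z * (-Real.sin (s * x) * s)) / (2 * Real.sqrt (c + Z * Real.cos (s * x)))) x :=
      (((hdcos x).const_mul Z).const_add c).sqrt hp.ne'
    have h2 : Φ =ᶠ[nhds x] (fun x => Real.sqrt (c + Z * Real.cos (s * x))) := by
      filter_upwards [(isOpen_lt continuous_abs continuous_const).mem_nhds hx] with y hy
      exact hin y hy
    rw [(h1.congr_of_eventuallyEq h2).deriv, hin x hx]
    have hq := Real.sqrt_pos.2 hp
    have : Real.sqrt (c + Z * Real.cos (s * x)) * ((Z * (-Real.sin (s * x) * s)) / (2 * Real.sqrt (c + Z * Real.cos (s * x)))) = -(Z * Real.sin (s * x) * s) / 2 := by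
      field_simp
    rw [this]
    linear_combination (Z ^ 2 * Real.sin (s * x) ^ 2 / 4) * hs2
  have M := aux_int x₀ hx₀pos (fun x => Φ x ^ 2) (fun x => c + Z * Real.cos (s * x))
    (fun x => c * x + Z / s * Real.sin (s * x)) (by fun_prop)
    (by
      intro x
      refine HasDerivAt.congr_deriv (((hasDerivAt_id x).const_mul c).add ((hdsin x).const_mul (Z / s))) ?_
      field_simp)
    (by intro x hx; simp only [hin x hx]; exact Real.sq_sqrt (hgt x hx).le)
    (by intro x hx; simp [hout x hx])
  have Q := aux_int x₀ hx₀pos (fun x => Φ x ^ 4) (fun x => (c + Z * Real.cos (s * x)) ^ 2)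
    (fun x => (c ^ 2 + Z ^ 2 / 2) * x + 2 * c * Z / s * Real.sin (s * x)
      + Z ^ 2 / (2 * s) * (Real.sin (s * x) * Real.cos (s * x))) (by fun_prop)
    (by
      intro x
      refine HasDerivAt.congr_deriv ((((hasDerivAt_id x).const_mul (c ^ 2 + Z ^ 2 / 2)).add
        ((hdsin x).const_mul (2 * c * Z / s))).add
        (((hdsin x).mul (hdcos x)).const_mul (Z ^ 2 / (2 * s)))) ?_
      field_simp
      linear_combination (-Z ^ 2) * Real.sin_sq_add_cos_sq (s * x))
    (by
      intro x hx; simp only [hin x hx]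
      have := Real.sq_sqrt (hgt x hx).le
      calc _ = (Real.sqrt (c + Z * Real.cos (s * x)) ^ 2) ^ 2 := by ring
        _ = _ := by rw [this])
    (by intro x hx; simp [hout x hx])
  have K := aux_int x₀ hx₀pos (fun x => (Φ x * deriv Φ x) ^ 2)
    (fun x => Z ^ 2 / 2 * Real.sin (s * x) ^ 2)
    (fun x => Z ^ 2 / 4 * x
      - Z ^ 2 / (4 * s) * (Real.sin (s * x) * Real.cos (s * x))) (by fun_prop)
    (by
      intro x
      refine HasDerivAt.congr_deriv (((hasDerivAt_id x).const_mul (Z ^ 2 / 4)).sub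
        (((hdsin x).mul (hdcos x)).const_mul (Z ^ 2 / (4 * s)))) ?_
      field_simp
      linear_combination (-2) * Real.sin_sq_add_cos_sq (s * x))
    hder
    (by intro x hx; simp [hout x hx])
  simp only [mul_neg, Real.sin_neg, Real.cos_neg] at M Q K
  have hsi : 1 / s = s / 2 := by field_simp; linarith
  have e1 : Z / s * Real.sin (s * x₀) = s * Real.sqrt B := by
    calc _ = (1 / s) * (Z * Real.sin (s * x₀)) := by ring
      _ = _ := by rw [hsi, hZs]; ring
  have e2 : Z ^ 2 / s * (Real.sin (s * x₀) * Real.cos (s * x₀)) = -c * (s * Real.sqrt B) := by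
    rw [← e1, ← hZc]; ring
  refine ⟨?_, ?_⟩
  · rw [M]; linear_combination 2 * e1
  · rw [K, Q]
    linear_combination (-c) * e1 - (1/2) * e2
end

section
/- Let m > 0 and let B ≥ 0, c ∈ ℝ satisfy B > 0, or B = 0 and c > 0. Set Z = √(4B + c²) and let x₀ ∈ (0, π/√2] be the least positive solution of cos(√2·x₀) = −c/Z. If 2c·x₀ + 2√2·√B = m, then c ≤ m/(√2·π), with equality if and only if B = 0. -/
/-- among p = 4 compactons of fixed mass m, the speed satisfies
c ≤ m/(√2·π), with equality iff B = 0. -/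
theorem stmt_10 (m B c Z x₀ : ℝ) (hm : 0 < m) (hB : 0 ≤ B)
    (hcase : 0 < B ∨ (B = 0 ∧ 0 < c))
    (hZ : Z = Real.sqrt (4 * B + c ^ 2))
    (hx₀pos : 0 < x₀) (hx₀le : x₀ ≤ Real.pi / Real.sqrt 2)
    (hx₀ : Real.cos (Real.sqrt 2 * x₀) = -c / Z)
    (hleast : ∀ y, 0 < y → Real.cos (Real.sqrt 2 * y) = -c / Z → x₀ ≤ y)
    (hmass : 2 * c * x₀ + 2 * Real.sqrt 2 * Real.sqrt B = m) :
    c ≤ m / (Real.sqrt 2 * Real.pi) ∧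
      (c = m / (Real.sqrt 2 * Real.pi) ↔ B = 0) := by
  have h2 : 0 < Real.sqrt 2 := by positivity
  have hs2 : Real.sqrt 2 * Real.sqrt 2 = 2 := Real.mul_self_sqrt (by norm_num)
  have hpi := Real.pi_pos
  have hd : 0 < Real.sqrt 2 * Real.pi := by positivity
  have harg : 0 < 4 * B + c ^ 2 := by
    rcases hcase with h | ⟨h, h'⟩
    · positivity
    · rw [h]; positivity
  have hZpos : 0 < Z := by rw [hZ]; exact Real.sqrt_pos.mpr harg
  have hZsq : Z ^ 2 = 4 * B + c ^ 2 := by rw [hZ]; exact Real.sq_sqrt harg.le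
  have hsB : Real.sqrt B ^ 2 = B := Real.sq_sqrt hB
  obtain ⟨t, ht⟩ : ∃ t, t = Real.sqrt 2 * x₀ := ⟨_, rfl⟩
  rw [← ht] at hx₀
  have ht0 : 0 < t := by rw [ht]; positivity
  have htpi : t ≤ Real.pi := by
    rw [le_div_iff₀ h2] at hx₀le
    rw [ht]; linarith
  have hm2 : m = Real.sqrt 2 * (c * t + 2 * Real.sqrt B) := by
    rw [← hmass, ht]; linear_combination (-c * x₀) * hs2
  have hq : m / (Real.sqrt 2 * Real.pi) = (c * t + 2 * Real.sqrt B) / Real.pi := by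
    rw [hm2]; field_simp
  have hcos : Z * Real.cos t = -c := by rw [hx₀]; field_simp
  rcases hcase with h | ⟨h, h'⟩
  · have key : c < m / (Real.sqrt 2 * Real.pi) := by
      rcases le_or_gt c 0 with hc | hc
      · exact lt_of_le_of_lt hc (by positivity)
      · rw [hq, lt_div_iff₀ hpi]
        have htlt : t < Real.pi := by
          refine lt_of_le_of_ne htpi fun he => ?_
          rw [he, Real.cos_pi] at hcos
          have : Z = c := by linarith
          rw [this] at hZsq; linarith
        have hcneg : Real.cos t < 0 := by
          by_contra hn
          push Not at hn
          have := mul_nonneg hZpos.le hn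
          linarith
        have hthalf : Real.pi / 2 < t := by
          by_contra hn
          push Not at hn
          have := Real.cos_nonneg_of_mem_Icc (x := t) ⟨by linarith, hn⟩
          linarith
        have hsin : Z * Real.sin t = 2 * Real.sqrt B := by
          have h1 := Real.sin_pos_of_pos_of_lt_pi ht0 htlt
          have h3 : (Z * Real.sin t) ^ 2 = (2 * Real.sqrt B) ^ 2 := by
            have := Real.sin_sq_add_cos_sq t
            have h4 : (Z * Real.cos t) ^ 2 = c ^ 2 := by rw [hcos]; ring
            linear_combination Z ^ 2 * this - h4 + hZsq - 4 * hsB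
          exact (sq_eq_sq₀ (by positivity) (by positivity)).mp h3
        have htan := Real.lt_tan (x := Real.pi - t) (by linarith) (by linarith)
        rw [Real.tan_eq_sin_div_cos, Real.sin_pi_sub, Real.cos_pi_sub,
          lt_div_iff₀ (by linarith)] at htan
        have := mul_lt_mul_of_pos_left htan hZpos
        rw [hsin] at this
        have e : Z * ((Real.pi - t) * -Real.cos t) = (Real.pi - t) * c := by
          linear_combination (-(Real.pi - t)) * hcos
        rw [e] at this
        linarith
    exact ⟨key.le, fun he => absurd he key.ne, fun he => absurd he h.ne'⟩
  · have hZc : Z = c := by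
      have : Z ^ 2 = c ^ 2 := by rw [hZsq, h]; ring
      exact (sq_eq_sq₀ hZpos.le h'.le).mp this
    have htp : t = Real.pi := by
      apply Real.injOn_cos ⟨ht0.le, htpi⟩ ⟨hpi.le, le_rfl⟩
      rw [Real.cos_pi, hx₀, hZc]; field_simp
    have key : c = m / (Real.sqrt 2 * Real.pi) := by
      rw [hq, htp, h, Real.sqrt_zero]; field_simp; ring
    exact ⟨key.le, fun _ => h, fun _ => key⟩
end

section
/- Let c < 1 and B > 0, set r = √(2B)/(1−c), and let Φ(x) = √((c−1)x² + 2B/(1−c)) for |x| ≤ r and Φ(x) = 0 otherwise. Then M(Φ) = ∫Φ² dx = (4/3)·(2B)^{3/2}/(1−c)², and H(Φ) = (1/2)∫(ΦΦ')² dx − (1/2)∫Φ² dx = −((1+c)/4)·M(Φ) = −(2B)^{3/2}·(1+c)/(3(1−c)²). -/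
open MeasureTheory

/-- mass and Hamiltonian of the explicit p = 2 compacton Φ_{B,c}:
M(Φ) = (4/3)(2B)^{3/2}/(1−c)² and H(Φ) = −((1+c)/4)·M(Φ) = −(2B)^{3/2}(1+c)/(3(1−c)²). -/
theorem stmt_11 (c B : ℝ) (hc : c < 1) (hB : 0 < B)
    (r : ℝ) (hr : r = Real.sqrt (2 * B) / (1 - c))
    (Φ : ℝ → ℝ)
    (hΦ : ∀ x, Φ x = if |x| ≤ r
      then Real.sqrt ((c - 1) * x ^ 2 + 2 * B / (1 - c)) else 0) :
    (∫ x, (Φ x) ^ 2) = (4 / 3) * (2 * B) ^ ((3 : ℝ) / 2) / (1 - c) ^ 2 ∧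
    (1 / 2) * (∫ x, (Φ x * deriv Φ x) ^ 2) - (1 / 2) * (∫ x, (Φ x) ^ 2)
      = -((1 + c) / 4) * ((4 / 3) * (2 * B) ^ ((3 : ℝ) / 2) / (1 - c) ^ 2) ∧
    (1 / 2) * (∫ x, (Φ x * deriv Φ x) ^ 2) - (1 / 2) * (∫ x, (Φ x) ^ 2)
      = -(2 * B) ^ ((3 : ℝ) / 2) * (1 + c) / (3 * (1 - c) ^ 2) := by
  obtain ⟨a, ha⟩ : ∃ a, a = 1 - c := ⟨_, rfl⟩
  obtain ⟨s, hs⟩ : ∃ s, s = Real.sqrt (2 * B) := ⟨_, rfl⟩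
  have ha0 : 0 < a := by linarith
  have hs0 : 0 < s := by rw [hs]; positivity
  have hs2 : s ^ 2 = 2 * B := by rw [hs]; exact Real.sq_sqrt (by positivity)
  have hpow : (2 * B) ^ ((3 : ℝ) / 2) = s ^ 3 := by
    rw [← hs2, ← Real.rpow_natCast s 2, ← Real.rpow_mul hs0.le, ← Real.rpow_natCast s 3]
    norm_num
  have hc' : c = 1 - a := by linarith
  rw [← ha, ← hs] at hr
  have hr0 : 0 < r := by rw [hr]; positivity
  have har : a * r = s := by rw [hr]; field_simp
  have hE : ∀ x, (c - 1) * x ^ 2 + 2 * B / (1 - c) = a * (r ^ 2 - x ^ 2) := by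
    intro x
    rw [← ha, ← hs2, ← har, hc']
    field_simp
    ring
  have hP : ∀ x, Φ x = if |x| ≤ r then Real.sqrt (a * (r ^ 2 - x ^ 2)) else 0 := by
    intro x; rw [hΦ, hE]
  have hout : ∀ x, x ∉ Set.Ioo (-r) r → Φ x = 0 := by
    intro x hx
    rw [hP]
    split_ifs with h
    · apply Real.sqrt_eq_zero_of_nonpos
      have h1 : r ≤ |x| := by
        by_contra h2
        exact hx (abs_lt.mp (not_le.mp h2))
      have h3 : r ^ 2 ≤ x ^ 2 := by rw [← sq_abs x]; gcongr
      nlinarith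
    · rfl
  have hpos : ∀ x ∈ Set.Ioo (-r) r, 0 < a * (r ^ 2 - x ^ 2) := by
    intro x hx
    have : 0 < (r - x) * (r + x) := mul_pos (by linarith [hx.2]) (by linarith [hx.1])
    apply mul_pos ha0; nlinarith
  have hin : ∀ x ∈ Set.Ioo (-r) r, Φ x = Real.sqrt (a * (r ^ 2 - x ^ 2)) := by
    intro x hx
    rw [hP, if_pos (abs_lt.mpr hx).le]
  have hM : (∫ x, (Φ x) ^ 2) = 4 / 3 * a * r ^ 3 := by
    have h : (fun x => (Φ x) ^ 2) =
        (Set.Ioo (-r) r).indicator (fun x => a * (r ^ 2 - x ^ 2)) := by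
      ext x
      by_cases hx : x ∈ Set.Ioo (-r) r
      · rw [Set.indicator_of_mem hx, hin x hx, Real.sq_sqrt (hpos x hx).le]
      · rw [Set.indicator_of_notMem hx, hout x hx]; simp
    rw [h, integral_indicator measurableSet_Ioo, ← integral_Ioc_eq_integral_Ioo,
      ← intervalIntegral.integral_of_le (by linarith), intervalIntegral.integral_const_mul,
      intervalIntegral.integral_sub (by simp) (by simp)]
    simp only [intervalIntegral.integral_const, integral_pow, smul_eq_mul]
    push_cast
    ring
  have hK : (∫ x, (Φ x * deriv Φ x) ^ 2) = 2 / 3 * a ^ 2 * r ^ 3 := by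
    have h : (fun x => (Φ x * deriv Φ x) ^ 2) =
        (Set.Ioo (-r) r).indicator (fun x => a ^ 2 * x ^ 2) := by
      ext x
      by_cases hx : x ∈ Set.Ioo (-r) r
      · have hev : Φ =ᶠ[nhds x] fun y => Real.sqrt (a * (r ^ 2 - y ^ 2)) := by
          filter_upwards [isOpen_Ioo.mem_nhds hx] with y hy using hin y hy
        have hd : HasDerivAt (fun y => a * (r ^ 2 - y ^ 2)) (a * (-(2 * x))) x := by
          have := (((hasDerivAt_pow 2 x).const_sub (r ^ 2)).const_mul a)
          simpa using this
        have hd2 := hd.sqrt (hpos x hx).ne'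
        rw [Set.indicator_of_mem hx, hev.deriv_eq, hd2.deriv, hin x hx]
        have hq := Real.sqrt_pos.mpr (hpos x hx)
        generalize Real.sqrt (a * (r ^ 2 - x ^ 2)) = q at hq
        field_simp
      · rw [Set.indicator_of_notMem hx, hout x hx]; simp
    rw [h, integral_indicator measurableSet_Ioo, ← integral_Ioc_eq_integral_Ioo,
      ← intervalIntegral.integral_of_le (by linarith), intervalIntegral.integral_const_mul]
    simp only [integral_pow]
    push_cast
    ring
  rw [hM, hK, hpow, ← ha, hr, hc']
  refine ⟨?_, ?_, ?_⟩ <;> field_simp <;> ring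
end

section
/- Let 2 < p < 8 and m > 0. There exists a constant C ≥ 0 such that for every nonnegative, integrable, locally absolutely continuous ρ : ℝ → ℝ with ∫ρ dx = m and ρ' ∈ L²(ℝ), one has (1/8)∫(ρ')² dx − (1/p)∫ρ^{p/2} dx ≥ −C. In other words, I_m := inf{𝓗(ρ) : ρ ≥ 0, ρ ∈ L¹ ∩ H¹-type class, ∫ρ = m} > −∞. -/
open MeasureTheory

lemma aux_young (K θ : ℝ) (hK : 0 < K) (h1 : θ < 1) (h0 : 0 < θ) :
    ∃ C : ℝ, 0 ≤ C ∧ ∀ E : ℝ, 1 ≤ E → K * E ^ θ ≤ E / 8 + C := by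
  set T := (8 * K) ^ (1 / (1 - θ)) with hT
  have hTpos : 0 < T := by positivity
  refine ⟨K * T ^ θ, by positivity, fun E hE => ?_⟩
  have hE0 : 0 < E := by linarith
  rcases le_total E T with h | h
  · have : E ^ θ ≤ T ^ θ := Real.rpow_le_rpow hE0.le h h0.le
    have := mul_le_mul_of_nonneg_left this hK.le
    linarith
  · have h2 : T ^ (1 - θ) ≤ E ^ (1 - θ) := Real.rpow_le_rpow hTpos.le h (by linarith)
    have h3 : T ^ (1 - θ) = 8 * K := by
      rw [hT, ← Real.rpow_mul (by positivity), one_div, inv_mul_cancel₀ (by linarith), Real.rpow_one]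
    have h4 : E ^ θ * E ^ (1 - θ) = E := by
      rw [← Real.rpow_add hE0]; simp
    have h5 : 0 < E ^ θ := by positivity
    have h6 : 0 ≤ K * T ^ θ := by positivity
    rw [h3] at h2
    nlinarith [mul_le_mul_of_nonneg_left h2 h5.le]

lemma aux_sup (m : ℝ) (ρ ρ' : ℝ → ℝ) (hn : ∀ x, 0 ≤ ρ x) (hi : Integrable ρ)
    (hd : ∀ a b : ℝ, ρ b - ρ a = ∫ x in a..b, ρ' x)
    (h2 : MemLp ρ' 2 (volume : Measure ℝ)) (hm : (∫ x, ρ x) = m)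
    (t : ℝ) (ht : 1 ≤ t) (hE : t ^ 3 = 1 + ∫ x, (ρ' x) ^ 2) (x : ℝ) :
    ρ x ≤ (m + 2) * t := by
  have ht0 : 0 < t := by linarith
  have hsq : Integrable (fun x => (ρ' x) ^ 2) := h2.integrable_sq
  have hL : x ≤ x + 1 / t := by have : 0 < 1 / t := by positivity
                                linarith
  have key : ∀ a ∈ Set.Icc x (x + 1 / t), ρ x ≤ ρ a + 2 * t := by
    intro a ha
    have e := hd a x
    rw [intervalIntegral.integral_symm, ← intervalIntegral.integral_neg] at e
    have hli : IntervalIntegrable ρ' volume x a :=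
      ((h2.locallyIntegrable (by norm_num)).integrableOn_isCompact
        isCompact_uIcc).intervalIntegrable
    have hsi : IntervalIntegrable (fun y => (1 / t ^ 2) * (ρ' y) ^ 2) volume x a :=
      (hsq.const_mul _).intervalIntegrable
    have b1 : ∫ y in x..a, -ρ' y ≤ ∫ y in x..a, ((1 / t ^ 2) * (ρ' y) ^ 2 + t ^ 2) := by
      apply intervalIntegral.integral_mono_on ha.1 hli.neg (hsi.add (by simp))
      intro y _
      have : (1 / t ^ 2) * (ρ' y) ^ 2 + t ^ 2 + ρ' y
          = (ρ' y / t + t / 2) ^ 2 + 3 / 4 * t ^ 2 := by field_simp; ring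
      rw [Pi.neg_apply]
      nlinarith [sq_nonneg (ρ' y / t + t / 2), sq_nonneg t]
    rw [intervalIntegral.integral_add hsi (by simp), intervalIntegral.integral_const_mul,
      intervalIntegral.integral_const] at b1
    have b2 : ∫ y in x..a, (ρ' y) ^ 2 ≤ ∫ y, (ρ' y) ^ 2 := by
      rw [intervalIntegral.integral_of_le ha.1]
      exact setIntegral_le_integral hsq (Filter.Eventually.of_forall fun y => sq_nonneg _)
    have b3 : (1 / t ^ 2) * ∫ y in x..a, (ρ' y) ^ 2 ≤ (1 / t ^ 2) * t ^ 3 :=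
      mul_le_mul_of_nonneg_left (by linarith) (by positivity)
    have b4 : (1 / t ^ 2) * t ^ 3 = t := by field_simp
    have b5 : (a - x) * t ^ 2 ≤ (1 / t) * t ^ 2 :=
      mul_le_mul_of_nonneg_right (by linarith [ha.2]) (by positivity)
    have b6 : (1 / t) * t ^ 2 = t := by field_simp
    rw [smul_eq_mul] at b1
    linarith
  have c1 : ∫ y in x..(x + 1 / t), ρ x ≤ ∫ y in x..(x + 1 / t), (ρ y + 2 * t) :=
    intervalIntegral.integral_mono_on hL (by simp) (hi.intervalIntegrable.add (by simp)) key
  rw [intervalIntegral.integral_add hi.intervalIntegrable (by simp),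
    intervalIntegral.integral_const, intervalIntegral.integral_const] at c1
  have c2 : ∫ y in x..(x + 1 / t), ρ y ≤ m := by
    rw [← hm, intervalIntegral.integral_of_le hL]
    exact setIntegral_le_integral hi (Filter.Eventually.of_forall hn)
  simp only [smul_eq_mul, add_sub_cancel_left] at c1
  have c3 : t * (1 / t * ρ x) ≤ t * (m + 1 / t * (2 * t)) :=
    mul_le_mul_of_nonneg_left (by linarith) ht0.le
  have c4 : t * (1 / t * ρ x) = ρ x := by field_simp
  have c5 : t * (m + 1 / t * (2 * t)) = (m + 2) * t := by field_simp
  linarith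

/-- for 2 < p < 8, the energy 𝓗(ρ) = (1/8)∫(ρ')² − (1/p)∫ρ^{p/2} is
bounded below on the set of nonnegative ρ with ∫ρ = m. -/
theorem stmt_13 (p m : ℝ) (hp1 : 2 < p) (hp2 : p < 8) (hm : 0 < m) :
    ∃ C : ℝ, 0 ≤ C ∧ ∀ (ρ ρ' : ℝ → ℝ),
      (∀ x, 0 ≤ ρ x) →
      Integrable ρ →
      (∀ a b : ℝ, ρ b - ρ a = ∫ x in a..b, ρ' x) →
      MemLp ρ' 2 (volume : Measure ℝ) →
      (∫ x, ρ x) = m →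
      -C ≤ (1 / 8) * (∫ x, (ρ' x) ^ 2) - (1 / p) * (∫ x, ρ x ^ (p / 2)) := by
  have hp0 : 0 < p := by linarith
  obtain ⟨C, hC, hCE⟩ := aux_young ((1 / p) * ((m + 2) ^ (p / 2 - 1) * m)) ((p / 2 - 1) / 3)
    (by positivity) (by linarith) (by linarith)
  refine ⟨C + 1 / 8, by linarith, fun ρ ρ' hn hi hd h2 hI => ?_⟩
  have hD : 0 ≤ ∫ x, (ρ' x) ^ 2 := integral_nonneg fun x => sq_nonneg _
  set D := ∫ x, (ρ' x) ^ 2 with hDd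
  have hE := hCE (1 + D) (by linarith)
  set t := (1 + D) ^ (1 / 3 : ℝ) with htd
  have ht : 1 ≤ t := Real.one_le_rpow (by linarith) (by norm_num)
  have ht3 : t ^ 3 = 1 + D := by
    rw [htd, ← Real.rpow_natCast, ← Real.rpow_mul (by linarith)]; norm_num
  have hs := aux_sup m ρ ρ' hn hi hd h2 hI t ht ht3
  have htq : t ^ (p / 2 - 1) = (1 + D) ^ ((p / 2 - 1) / 3) := by
    rw [htd, ← Real.rpow_mul (by linarith)]; congr 1; ring
  have hb : ∫ x, ρ x ^ (p / 2) ≤ ∫ x, ((m + 2) * t) ^ (p / 2 - 1) * ρ x := by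
    apply integral_mono_of_nonneg (Filter.Eventually.of_forall fun x => Real.rpow_nonneg (hn x) _)
      (hi.const_mul _) (Filter.Eventually.of_forall fun x => ?_)
    have : ρ x ^ (p / 2) = ρ x ^ (p / 2 - 1) * ρ x := by
      have := Real.rpow_add_one' (hn x) (y := p / 2 - 1) (by linarith)
      rwa [sub_add_cancel] at this
    simp only [this]
    exact mul_le_mul_of_nonneg_right
      (Real.rpow_le_rpow (hn x) (hs x) (by linarith)) (hn x)
  rw [integral_const_mul, hI, Real.mul_rpow (by linarith) (by linarith), htq] at hb
  have := mul_le_mul_of_nonneg_left hb (show 0 ≤ 1 / p by positivity)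
  linarith
end

section
/- Let 2 < p < 8 and m > 0. There exists a nonnegative, smooth, compactly supported function ρ : ℝ → ℝ with ∫ρ dx = m such that (1/8)∫(ρ')² dx − (1/p)∫ρ^{p/2} dx < 0. Hence the infimum I_m of 𝓗 over the constraint set {ρ ≥ 0, ∫ρ = m} is strictly negative. -/
open MeasureTheory

/-- for 2 < p < 8 and m > 0 there is a nonnegative smooth compactly
supported ρ with ∫ρ = m and 𝓗(ρ) = (1/8)∫(ρ')² − (1/p)∫ρ^{p/2} < 0. -/
theorem stmt_14 (p m : ℝ) (hp1 : 2 < p) (hp2 : p < 8) (hm : 0 < m) :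
    ∃ ρ : ℝ → ℝ,
      (∀ x, 0 ≤ ρ x) ∧
      ContDiff ℝ (⊤ : ℕ∞) ρ ∧
      HasCompactSupport ρ ∧
      (∫ x, ρ x) = m ∧
      (1 / 8) * (∫ x, (deriv ρ x) ^ 2) - (1 / p) * (∫ x, ρ x ^ (p / 2)) < 0 := by
  obtain ⟨φ, h0, hs, hc, hi⟩ : ∃ φ : ℝ → ℝ, (∀ x, 0 ≤ φ x) ∧ ContDiff ℝ (⊤ : ℕ∞) φ ∧
      HasCompactSupport φ ∧ (∫ x, φ x) = m := by
    let f : ContDiffBump (0 : ℝ) := ⟨1, 2, by norm_num, by norm_num⟩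
    refine ⟨fun x => m * f.normed volume x, fun x => mul_nonneg hm.le (f.nonneg_normed x),
      contDiff_const.mul f.contDiff_normed, f.hasCompactSupport_normed.mul_left, ?_⟩
    rw [integral_const_mul, f.integral_normed, mul_one]
  have hp : 0 < p / 2 := by linarith
  have hB : 0 < ∫ x, φ x ^ (p / 2) := by
    obtain ⟨x, hx⟩ : ∃ x, φ x ≠ 0 := by
      by_contra! h
      simp [h] at hi
      linarith
    refine Continuous.integral_pos_of_hasCompactSupport_nonneg_nonzero (x := x)
      (hs.continuous.rpow_const fun _ => Or.inr hp.le) ?_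
      (fun y => Real.rpow_nonneg (h0 y) _) ?_
    · exact hc.comp_left (g := fun t : ℝ => t ^ (p / 2)) (Real.zero_rpow hp.ne')
    · exact (Real.rpow_pos_of_pos (lt_of_le_of_ne (h0 x) hx.symm) _).ne'
  set A := ∫ x, (deriv φ x) ^ 2 with hA
  set B := ∫ x, φ x ^ (p / 2) with hBdef
  obtain ⟨l, hl, hlt⟩ : ∃ l : ℝ, 0 < l ∧ l ^ (4 - p / 2) * (A / 8) < B / p := by
    have hcont : ContinuousAt (fun l : ℝ => l ^ (4 - p / 2) * (A / 8)) 0 :=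
      (Real.continuousAt_rpow_const _ _ (Or.inr (by linarith))).mul continuousAt_const
    have hlt : (0 : ℝ) ^ (4 - p / 2) * (A / 8) < B / p := by
      rw [Real.zero_rpow (by linarith), zero_mul]
      exact div_pos hB (by linarith)
    have h1 : ∀ᶠ l in nhdsWithin (0 : ℝ) (Set.Ioi 0), l ^ (4 - p / 2) * (A / 8) < B / p :=
      (hcont.eventually_lt continuousAt_const hlt).filter_mono nhdsWithin_le_nhds
    obtain ⟨l, h, h'⟩ := (h1.and self_mem_nhdsWithin).exists
    exact ⟨l, h', h⟩
  have hd : ∀ x, deriv (fun x => l * φ (l * x)) x = l ^ 2 * deriv φ (l * x) := by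
    intro x
    have h1 : HasDerivAt φ (deriv φ (l * x)) (l * x) :=
      ((hs.differentiable (by simp)) (l * x)).hasDerivAt
    have h2 : HasDerivAt (fun x => l * x) l x := by
      simpa using (hasDerivAt_id x).const_mul l
    have h3 := (h1.comp x h2).const_mul l
    rw [show (fun x => l * φ (l * x)) = fun y => l * (φ ∘ fun x => l * x) y from rfl, h3.deriv]
    ring
  refine ⟨fun x => l * φ (l * x), fun x => mul_nonneg hl.le (h0 _),
    contDiff_const.mul (hs.comp (contDiff_const.mul contDiff_id)), ?_, ?_, ?_⟩
  · exact HasCompactSupport.mul_left (hc.comp_homeomorph (Homeomorph.mulLeft₀ l hl.ne'))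
  · rw [integral_const_mul, Measure.integral_comp_mul_left φ l, hi, abs_of_pos (inv_pos.2 hl),
      smul_eq_mul]
    field_simp
  · have e1 : (∫ x, (deriv (fun x => l * φ (l * x)) x) ^ 2) = l ^ 3 * A := by
      simp_rw [hd, mul_pow]
      rw [integral_const_mul, Measure.integral_comp_mul_left (fun y => deriv φ y ^ 2) l,
        abs_of_pos (inv_pos.2 hl), smul_eq_mul, ← hA]
      field_simp
    have e2 : (∫ x, (l * φ (l * x)) ^ (p / 2)) = l ^ (p / 2 - 1) * B := by
      simp_rw [fun x => Real.mul_rpow (z := p / 2) hl.le (h0 (l * x))]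
      rw [integral_const_mul, Measure.integral_comp_mul_left (fun y => φ y ^ (p / 2)) l,
        abs_of_pos (inv_pos.2 hl), smul_eq_mul, ← hBdef, Real.rpow_sub_one hl.ne']
      field_simp
    rw [e1, e2]
    have e3 : l ^ 3 = l ^ (p / 2 - 1) * l ^ (4 - p / 2) := by
      rw [← Real.rpow_add hl, ← Real.rpow_natCast]
      congr 1
      push_cast
      ring
    have := mul_lt_mul_of_pos_left hlt (Real.rpow_pos_of_pos hl (p / 2 - 1))
    rw [e3]
    have e4 : 1 / p * (l ^ (p / 2 - 1) * B) = l ^ (p / 2 - 1) * (B / p) := by ring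
    rw [e4]
    linarith
end

section
/- Let 2 < p < 8 and m > 0. Let A_m be the set of nonnegative, integrable, locally absolutely continuous functions ρ : ℝ → ℝ with ∫ρ dx = m and derivative ρ' ∈ L²(ℝ). Then the minimization problem for 𝓗(ρ) = (1/8)∫(ρ')² dx − (1/p)∫ρ^{p/2} dx over A_m admits a minimizer: there exists ρ* ∈ A_m such that 𝓗(ρ*) ≤ 𝓗(ρ) for all ρ ∈ A_m. -/
open MeasureTheory

noncomputable def gq (q t : ℝ) : ℝ := √(t - t ^ q)
noncomputable def Gq (q t : ℝ) : ℝ := ∫ s in (0:ℝ)..t, gq q s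

lemma gq_cont {q : ℝ} (hq : 1 < q) : Continuous (gq q) :=
  (continuous_id.sub (Real.continuous_rpow_const (by linarith))).sqrt

lemma gq_nonneg (q t : ℝ) : 0 ≤ gq q t := Real.sqrt_nonneg _

lemma rpow_le_self' {q t : ℝ} (hq : 1 < q) (h0 : 0 ≤ t) (h1 : t ≤ 1) : t ^ q ≤ t := by
  have := Real.rpow_le_rpow_of_exponent_ge' h0 h1 (by norm_num : (0:ℝ) ≤ 1) hq.le
  simpa using this

lemma gq_sq {q t : ℝ} (hq : 1 < q) (h0 : 0 ≤ t) (h1 : t ≤ 1) : gq q t ^ 2 = t - t ^ q :=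
  Real.sq_sqrt (by linarith [rpow_le_self' hq h0 h1])

lemma gq_le_one {q t : ℝ} (h0 : 0 ≤ t) (h1 : t ≤ 1) : gq q t ≤ 1 := by
  rw [gq, Real.sqrt_le_iff]
  refine ⟨zero_le_one, ?_⟩
  linarith [Real.rpow_nonneg h0 q]

lemma gq_pos {q t : ℝ} (hq : 1 < q) (h0 : 0 < t) (h1 : t < 1) : 0 < gq q t := by
  apply Real.sqrt_pos.2
  have := Real.rpow_lt_rpow_of_exponent_gt h0 h1 hq
  simp at this
  linarith

lemma gq_zero {q : ℝ} (hq : 1 < q) : gq q 0 = 0 := by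
  simp [gq, Real.zero_rpow (by linarith : q ≠ 0)]

lemma gq_one {q : ℝ} : gq q 1 = 0 := by simp [gq]

lemma Gq_deriv {q : ℝ} (hq : 1 < q) (t : ℝ) : HasDerivAt (Gq q) (gq q t) t :=
  intervalIntegral.integral_hasDerivAt_right ((gq_cont hq).intervalIntegrable _ _)
    ((gq_cont hq).stronglyMeasurableAtFilter _ _) (gq_cont hq).continuousAt

lemma Gq_cont {q : ℝ} (hq : 1 < q) : Continuous (Gq q) :=
  continuous_iff_continuousAt.2 fun t => (Gq_deriv hq t).continuousAt

lemma Gq_lip {q x y : ℝ} (hq : 1 < q) (hx : x ∈ Set.Icc (0:ℝ) 1) (hy : y ∈ Set.Icc (0:ℝ) 1) :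
    dist (Gq q x) (Gq q y) ≤ dist x y := by
  have h : Gq q x - Gq q y = ∫ s in y..x, gq q s := by
    rw [Gq, Gq, intervalIntegral.integral_interval_sub_left]
    · exact (gq_cont hq).intervalIntegrable _ _
    · exact (gq_cont hq).intervalIntegrable _ _
  rw [Real.dist_eq, Real.dist_eq, h, ← Real.norm_eq_abs]
  have := intervalIntegral.norm_integral_le_of_norm_le_const (a := y) (b := x) (f := gq q) (C := 1) ?_
  · simpa using this
  · intro s hs
    have hs' := Set.uIcc_subset_Icc hy hx (Set.uIoc_subset_uIcc hs)
    rw [Real.norm_eq_abs, abs_of_nonneg (gq_nonneg _ _)]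
    exact gq_le_one hs'.1 hs'.2

lemma Gq_one_pos {q : ℝ} (hq : 1 < q) : 0 < Gq q 1 :=
  intervalIntegral.intervalIntegral_pos_of_pos_on ((gq_cont hq).intervalIntegrable _ _)
    (fun _ hx => gq_pos hq hx.1 hx.2) one_pos

lemma chain {q : ℝ} (hq : 1 < q) (u u' : ℝ → ℝ) (hu : ∀ x, u x ∈ Set.Icc (0:ℝ) 1)
    (hd : ∀ a b, u b - u a = ∫ x in a..b, u' x) (hi : LocallyIntegrable u') (a b : ℝ) :
    Gq q (u b) - Gq q (u a) = ∫ x in a..b, gq q (u x) * u' x := by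
  have hii : IntervalIntegrable u' volume a b := (hi.integrableOn_isCompact isCompact_uIcc).intervalIntegrable
  have hac : AbsolutelyContinuousOnInterval (fun x => ∫ t in a..x, u' t) a b :=
    hii.absolutelyContinuousOnInterval_intervalIntegral (c := a) (by simp)
  have hac2 : AbsolutelyContinuousOnInterval (fun x => Gq q (u x)) a b := by
    refine squeeze_zero (fun t ↦ ?_) (fun t ↦ ?_) hac
    · exact Finset.sum_nonneg (fun i hi ↦ by positivity)
    · gcongr with i hi
      beta_reduce
      rw [← hd, ← hd, dist_sub_right]
      exact Gq_lip hq (hu _) (hu _)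
  rw [← hac2.integral_deriv_eq_sub]
  apply intervalIntegral.integral_congr_ae
  filter_upwards [LocallyIntegrable.ae_hasDerivAt_integral hi] with x hx _
  have h1 : HasDerivAt u (u' x) x := by
    have := (hx a).const_add (u a)
    refine this.congr_of_eventuallyEq (Filter.Eventually.of_forall fun y => ?_)
    simp only [← hd]; ring
  exact ((Gq_deriv hq (u x)).comp x h1).deriv

lemma zero_mem_closure_image {u : ℝ → ℝ} (hu : Integrable u) {S : Set ℝ} (hS : volume S = ⊤) :
    (0:ℝ) ∈ closure (u '' S) := by
  rw [Metric.mem_closure_iff]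
  intro ε hε
  by_contra! h
  have h1 := hu.measure_norm_ge_lt_top hε
  have h2 : S ⊆ {x | ε ≤ ‖u x‖} := by
    intro x hx
    have := h _ (Set.mem_image_of_mem u hx)
    simpa [Real.dist_eq] using this
  have := measure_mono (μ := volume) h2
  rw [hS] at this
  exact absurd h1 (not_lt.2 this)

lemma rho_bdd {ρ ρ' : ℝ → ℝ} (h0 : ∀ x, 0 ≤ ρ x) (hI : Integrable ρ)
    (hd : ∀ a b : ℝ, ρ b - ρ a = ∫ x in a..b, ρ' x) (hL : MemLp ρ' 2 (volume : Measure ℝ)) :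
    BddAbove (Set.range ρ) := by
  have hsq : Integrable (fun x => ρ' x ^ 2) := hL.integrable_sq
  have hloc : LocallyIntegrable ρ' := hL.locallyIntegrable (by norm_num)
  set C : ℝ := 1 / 2 + (∫ x, ρ' x ^ 2) / 2 with hC
  have hii : ∀ a b, IntervalIntegrable ρ' volume a b := fun a b =>
    (hloc.integrableOn_isCompact isCompact_uIcc).intervalIntegrable
  have key : ∀ x y, y ∈ Set.Icc x (x+1) → ρ x ≤ ρ y + C := by
    intro x y hy
    have h1 : ρ x = ρ y - ∫ t in x..y, ρ' t := by rw [← hd]; ring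
    have h2 : -(∫ t in x..y, ρ' t) ≤ ∫ t in x..y, (1 / 2 + ρ' t ^ 2 / 2) := by
      rw [← intervalIntegral.integral_neg]
      apply intervalIntegral.integral_mono_on hy.1 (hii _ _).neg
      · exact (intervalIntegrable_const).add (hsq.intervalIntegrable.div_const 2)
      · intro t _
        simp only [Pi.neg_apply]
        nlinarith [sq_nonneg (ρ' t + 1)]
    have h3 : ∫ t in x..y, (1 / 2 + ρ' t ^ 2 / 2) = (y - x) / 2 + (∫ t in x..y, ρ' t ^ 2) / 2 := by
      rw [intervalIntegral.integral_add intervalIntegrable_const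
        (hsq.intervalIntegrable.div_const 2), intervalIntegral.integral_div]
      simp [div_eq_mul_inv]
    have h4 : ∫ t in x..y, ρ' t ^ 2 ≤ ∫ t, ρ' t ^ 2 := by
      rw [intervalIntegral.integral_of_le hy.1]
      exact setIntegral_le_integral hsq (Filter.Eventually.of_forall fun t => sq_nonneg _)
    have := hy.2
    linarith
  refine ⟨(∫ x, ρ x) + C, ?_⟩
  rintro _ ⟨x, rfl⟩
  have h1 : ∫ y in x..(x+1), ρ x ≤ ∫ y in x..(x+1), (ρ y + C) := by
    apply intervalIntegral.integral_mono_on (by linarith) intervalIntegrable_const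
    · exact hI.intervalIntegrable.add intervalIntegrable_const
    · exact fun y hy => key x y hy
  rw [intervalIntegral.integral_add hI.intervalIntegrable intervalIntegrable_const] at h1
  simp at h1
  have h4 : ∫ t in x..(x+1), ρ t ≤ ∫ t, ρ t := by
    rw [intervalIntegral.integral_of_le (by linarith)]
    exact setIntegral_le_integral hI (Filter.Eventually.of_forall fun t => h0 t)
  linarith

lemma lower {q m : ℝ} (hq : 1 < q) (hm : 0 < m) {ρ ρ' : ℝ → ℝ} (h0 : ∀ x, 0 ≤ ρ x)
    (hI : Integrable ρ)
    (hd : ∀ a b : ℝ, ρ b - ρ a = ∫ x in a..b, ρ' x) (hL : MemLp ρ' 2 (volume : Measure ℝ))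
    (hmass : ∫ x, ρ x = m) :
    ∃ M : ℝ, 0 < M ∧ √(M ^ q / (4 * q)) * M * (2 * Gq q 1) - (m / (2 * q)) * M ^ (q - 1) ≤
      (1 / 8) * (∫ x, (ρ' x) ^ 2) - (1 / (2 * q)) * (∫ x, ρ x ^ q) := by
  have hbd := rho_bdd h0 hI hd hL
  have hsq : Integrable (fun x => ρ' x ^ 2) := hL.integrable_sq
  have hloc : LocallyIntegrable ρ' := hL.locallyIntegrable (by norm_num)
  have hii : ∀ a b, IntervalIntegrable ρ' volume a b := fun a b =>
    (hloc.integrableOn_isCompact isCompact_uIcc).intervalIntegrable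
  have hcont : Continuous ρ := by
    have h : ρ = fun x => ρ 0 + ∫ t in (0:ℝ)..x, ρ' t := by
      ext x; rw [← hd]; ring
    rw [h]
    exact continuous_const.add (intervalIntegral.continuous_primitive hii 0)
  set M := sSup (Set.range ρ) with hM
  have hle : ∀ x, ρ x ≤ M := fun x => le_csSup hbd ⟨x, rfl⟩
  have hMpos : 0 < M := by
    by_contra! h
    have : ∀ x, ρ x = 0 := fun x => le_antisymm ((hle x).trans h) (h0 x)
    simp [this] at hmass
    linarith
  refine ⟨M, hMpos, ?_⟩
  set u : ℝ → ℝ := fun x => ρ x / M with hu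
  have hu01 : ∀ x, u x ∈ Set.Icc (0:ℝ) 1 := fun x =>
    ⟨div_nonneg (h0 x) hMpos.le, (div_le_one hMpos).2 (hle x)⟩
  have huI : Integrable u := hI.div_const M
  have hucont : Continuous u := hcont.div_const M
  have huqI : Integrable (fun x => u x ^ q) := by
    refine huI.mono' ((Real.continuous_rpow_const (by linarith)).comp hucont).aestronglyMeasurable ?_
    refine Filter.Eventually.of_forall fun x => ?_
    rw [Real.norm_eq_abs, abs_of_nonneg (Real.rpow_nonneg (hu01 x).1 _)]
    exact rpow_le_self' hq (hu01 x).1 (hu01 x).2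
  have hud : ∀ a b, u b - u a = ∫ x in a..b, ρ' x / M := by
    intro a b
    rw [intervalIntegral.integral_div, ← hd]
    simp only [hu]; ring
  have hch := chain hq u (fun x => ρ' x / M) hu01 hud (by
    have := hloc.smul (M⁻¹)
    have e : (fun x => ρ' x / M) = M⁻¹ • ρ' := by ext x; simp [div_eq_inv_mul]
    rwa [e])
  have hMq : 0 < M ^ q := Real.rpow_pos_of_pos hMpos q
  have hq0 : 0 < q := by linarith
  set κ := √(M ^ q / (4 * q)) with hκ
  have hκ0 : 0 ≤ κ := Real.sqrt_nonneg _
  have hκ2 : κ ^ 2 = M ^ q / (4 * q) := Real.sq_sqrt (by positivity)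
  set E : ℝ → ℝ := fun x => (1/8) * ρ' x ^ 2 + (M ^ q / (2 * q)) * (u x - u x ^ q) with hE
  have hEI : Integrable E := (hsq.const_mul _).add ((huI.sub huqI).const_mul _)
  have hE0 : ∀ x, 0 ≤ E x := by
    intro x
    have := rpow_le_self' hq (hu01 x).1 (hu01 x).2
    have : 0 ≤ u x - u x ^ q := by linarith
    simp only [hE]; positivity
  have hEint : ∫ x, E x = (1 / 8) * (∫ x, (ρ' x) ^ 2) + (m / (2 * q)) * M ^ (q - 1)
      - (1 / (2 * q)) * (∫ x, ρ x ^ q) := by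
    have e1 : ∫ x, u x = m / M := by simp only [hu, integral_div, hmass]
    have e2 : ∫ x, u x ^ q = (∫ x, ρ x ^ q) / M ^ q := by
      rw [← integral_div]
      congr 1; ext x
      exact Real.div_rpow (h0 x) hMpos.le q
    have hs : Integrable (fun x => u x - u x ^ q) := huI.sub huqI
    simp only [hE]
    rw [integral_add (hsq.const_mul _) (hs.const_mul _), integral_const_mul,
      integral_const_mul, integral_sub huI huqI, e1, e2, Real.rpow_sub hMpos, Real.rpow_one]
    field_simp
    ring
  have hptw : ∀ x, κ * M * |gq q (u x) * (ρ' x / M)| ≤ E x := by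
    intro x
    rw [abs_mul, abs_div, abs_of_pos hMpos, abs_of_nonneg (gq_nonneg _ _)]
    have e : κ * M * (gq q (u x) * (|ρ' x| / M)) = κ * gq q (u x) * |ρ' x| := by
      field_simp
    rw [e]
    simp only [hE]
    rw [← gq_sq hq (hu01 x).1 (hu01 x).2, ← sq_abs (ρ' x)]
    have : M ^ q / (2 * q) = 2 * κ ^ 2 := by rw [hκ2]; field_simp; ring
    rw [this]
    nlinarith [sq_nonneg (|ρ' x| - 4 * (κ * gq q (u x)))]
  have hgi : ∀ a b, IntervalIntegrable (fun x => gq q (u x) * (ρ' x / M)) volume a b := fun a b =>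
    ((hii a b).div_const M).continuousOn_mul ((gq_cont hq).comp hucont).continuousOn
  have hseg : ∀ a b, a ≤ b → κ * M * |Gq q (u b) - Gq q (u a)| ≤ ∫ x in a..b, E x := by
    intro a b hab
    rw [hch]
    calc _ ≤ κ * M * ∫ x in a..b, |gq q (u x) * (ρ' x / M)| := by
          gcongr
          exact intervalIntegral.abs_integral_le_integral_abs hab
      _ = ∫ x in a..b, κ * M * |gq q (u x) * (ρ' x / M)| := by
          rw [intervalIntegral.integral_const_mul]
      _ ≤ _ := intervalIntegral.integral_mono_on hab ((hgi a b).abs.const_mul _)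
          hEI.intervalIntegrable fun x _ => hptw x
  have h3 : ∀ a c b, a < c → c < b →
      κ * M * (2 * Gq q (u c) - Gq q (u a) - Gq q (u b)) ≤ ∫ x, E x := by
    intro a c b hac hcb
    have i1 := hseg a c hac.le
    have i2 := hseg c b hcb.le
    have i3 : (∫ x in a..c, E x) + ∫ x in c..b, E x = ∫ x in a..b, E x :=
      intervalIntegral.integral_add_adjacent_intervals hEI.intervalIntegrable hEI.intervalIntegrable
    have i4 : ∫ t in a..b, E t ≤ ∫ t, E t := by
      rw [intervalIntegral.integral_of_le (hac.trans hcb).le]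
      exact setIntegral_le_integral hEI (Filter.Eventually.of_forall fun t => hE0 t)
    have hκM : 0 ≤ κ * M := by positivity
    have j1 := mul_le_mul_of_nonneg_left (le_abs_self (Gq q (u c) - Gq q (u a))) hκM
    have j2 := mul_le_mul_of_nonneg_left (neg_le_abs (Gq q (u b) - Gq q (u c))) hκM
    linarith
  have hG := Gq_cont hq
  have hG0 : Gq q 0 = 0 := by simp [Gq]
  have h4 : ∀ a c, a < c → κ * M * (2 * Gq q (u c) - Gq q (u a)) ≤ ∫ x, E x := by
    intro a c hac
    have hcl : IsClosed {t | κ * M * (2 * Gq q (u c) - Gq q (u a) - Gq q t) ≤ ∫ x, E x} :=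
      isClosed_le (by fun_prop) continuous_const
    have := closure_minimal (s := u '' Set.Ioi c) (by
      rintro _ ⟨b, hb, rfl⟩
      exact h3 a c b hac hb) hcl (zero_mem_closure_image huI (by simp))
    simpa [hG0] using this
  have h5 : ∀ c, κ * M * (2 * Gq q (u c)) ≤ ∫ x, E x := by
    intro c
    have hcl : IsClosed {t | κ * M * (2 * Gq q (u c) - Gq q t) ≤ ∫ x, E x} :=
      isClosed_le (by fun_prop) continuous_const
    have := closure_minimal (s := u '' Set.Iio c) (by
      rintro _ ⟨b, hb, rfl⟩
      exact h4 b c hb) hcl (zero_mem_closure_image huI (by simp))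
    simpa [hG0] using this
  have h6 : κ * M * (2 * Gq q 1) ≤ ∫ x, E x := by
    have hcl : IsClosed {t | κ * M * (2 * Gq q (t / M)) ≤ ∫ x, E x} :=
      isClosed_le (by fun_prop) continuous_const
    have := closure_minimal (s := Set.range ρ) (by
      rintro _ ⟨b, rfl⟩
      exact h5 b) hcl (csSup_mem_closure (Set.range_nonempty _) hbd)
    simpa [← hM, div_self hMpos.ne'] using this
  linarith

lemma gq_lower {q t : ℝ} (hq : 1 < q) (h0 : 0 < t) (h1 : t < 1) :
    min 1 (q - 1) * (t * (1 - t)) ≤ t - t ^ q := by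
  set c := min 1 (q - 1) with hc
  have hc0 : 0 ≤ c := le_min zero_le_one (by linarith)
  have hc1 : c ≤ 1 := min_le_left _ _
  have e : t ^ q = t * t ^ (q - 1) := by
    rw [Real.rpow_sub h0, Real.rpow_one]; field_simp
  have a1 : t ^ (q - 1) ≤ t ^ c :=
    Real.rpow_le_rpow_of_exponent_ge h0 h1.le (min_le_right _ _)
  have a2 := rpow_one_add_le_one_add_mul_self (s := t - 1) (by linarith) hc0 hc1
  rw [show 1 + (t - 1) = t by ring] at a2
  rw [e]
  nlinarith

lemma ginv_int {q : ℝ} (hq : 1 < q) :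
    IntegrableOn (fun t => (gq q t)⁻¹) (Set.Ioo 0 1) := by
  have h1 : IntegrableOn (fun t : ℝ => 1 / √(1 - (2 * t - 1) ^ 2) * 2) (Set.Ioc 0 1) := by
    apply intervalIntegral.integrableOn_deriv_of_nonneg
      (g := fun t => Real.arcsin (2 * t - 1))
    · exact (Real.continuous_arcsin.comp (by fun_prop)).continuousOn
    · intro x hx
      have hd : HasDerivAt (fun t : ℝ => 2 * t - 1) 2 x := by
        simpa using ((hasDerivAt_id x).const_mul 2).sub_const 1
      exact (Real.hasDerivAt_arcsin (by linarith [hx.1] : 2 * x - 1 ≠ -1)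
        (by linarith [hx.2])).comp x hd
    · intro x _; positivity
  set c := min 1 (q - 1) with hc
  have hc0 : 0 < c := lt_min one_pos (by linarith)
  have h2 := (h1.mono_set Set.Ioo_subset_Ioc_self).const_mul (√c)⁻¹
  refine Integrable.mono' h2 (gq_cont hq).measurable.inv.aestronglyMeasurable ?_
  refine (ae_restrict_iff' measurableSet_Ioo).2 (Filter.Eventually.of_forall fun t ht => ?_)
  rw [Real.norm_eq_abs, abs_of_nonneg (inv_nonneg.2 (gq_nonneg _ _))]
  have h3 := gq_lower hq ht.1 ht.2
  have ht' : 0 < t * (1 - t) := mul_pos ht.1 (by linarith [ht.2])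
  have e : √(1 - (2 * t - 1) ^ 2) = 2 * √(t * (1 - t)) := by
    rw [show 1 - (2 * t - 1) ^ 2 = 2 ^ 2 * (t * (1 - t)) by ring, Real.sqrt_mul (by norm_num),
      Real.sqrt_sq (by norm_num)]
  have hs : 0 < √(t * (1 - t)) := Real.sqrt_pos.2 ht'
  have hsc : 0 < √c := Real.sqrt_pos.2 hc0
  have e2 : (√c)⁻¹ * (1 / √(1 - (2 * t - 1) ^ 2) * 2) = (√(c * (t * (1 - t))))⁻¹ := by
    rw [e, Real.sqrt_mul hc0.le]; field_simp
  rw [e2]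
  apply inv_anti₀
  · exact Real.sqrt_pos.2 (by positivity)
  · exact Real.sqrt_le_sqrt h3

lemma exists_Y {q : ℝ} (hq : 1 < q) : ∃ (T : ℝ) (Y : ℝ → ℝ), 0 < T ∧ Continuous Y ∧
    StrictMono Y ∧ Y 0 = 0 ∧ Y T = 1 ∧
    ∀ x ∈ Set.Ioo 0 T, HasDerivAt Y (gq q (Y x)) x := by
  set k : ℝ → ℝ := Set.indicator (Set.Ioo 0 1) (fun t => (gq q t)⁻¹ - 1) with hk
  have hkI : Integrable k := by
    rw [hk, integrable_indicator_iff measurableSet_Ioo]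
    exact (ginv_int hq).sub (by simp [integrableOn_const_iff])
  set f : ℝ → ℝ := fun t => 1 + k t with hf
  have hfi : ∀ a b, IntervalIntegrable f volume a b := fun a b =>
    intervalIntegrable_const.add hkI.intervalIntegrable
  have hf01 : ∀ t ∈ Set.Ioo (0:ℝ) 1, f t = (gq q t)⁻¹ := by
    intro t ht
    simp [hf, hk, Set.indicator_of_mem ht]
  have hfpos : ∀ t, 0 < f t := by
    intro t
    by_cases ht : t ∈ Set.Ioo (0:ℝ) 1
    · rw [hf01 t ht]; exact inv_pos.2 (gq_pos hq ht.1 ht.2)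
    · simp [hf, hk, Set.indicator_of_notMem ht]
  set X : ℝ → ℝ := fun t => ∫ s in (0:ℝ)..t, f s with hX
  have hXc : Continuous X := intervalIntegral.continuous_primitive hfi 0
  have hXm : StrictMono X := by
    intro a b hab
    have := intervalIntegral.intervalIntegral_pos_of_pos (hfi a b) hfpos hab
    have h2 : X b - X a = ∫ s in a..b, f s :=
      intervalIntegral.integral_interval_sub_left (hfi _ _) (hfi _ _)
    linarith
  have hXe : ∀ t, X t = t + ∫ s in (0:ℝ)..t, k s := by
    intro t
    simp only [hX, hf]
    rw [intervalIntegral.integral_add intervalIntegrable_const hkI.intervalIntegrable]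
    simp
  have hB : ∀ t, |∫ s in (0:ℝ)..t, k s| ≤ ∫ s, |k s| := by
    intro t
    have := intervalIntegral.norm_integral_le_integral_norm_uIoc (f := k) (a := 0) (b := t)
      (μ := volume)
    refine this.trans ?_
    exact setIntegral_le_integral hkI.norm (Filter.Eventually.of_forall fun t => norm_nonneg _)
  have hXs : Function.Surjective X := by
    apply hXc.surjective
    · refine Filter.tendsto_atTop_mono (f := fun t => t + -(∫ s, |k s|)) (fun t => ?_)
        (Filter.tendsto_atTop_add_const_right _ _ Filter.tendsto_id)
      rw [hXe]; have := abs_le.1 (hB t); linarith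
    · refine Filter.tendsto_atBot_mono (f := fun t => t + (∫ s, |k s|)) (fun t => ?_)
        (Filter.tendsto_atBot_add_const_right _ _ Filter.tendsto_id)
      rw [hXe]; have := abs_le.1 (hB t); linarith
  set e := StrictMono.orderIsoOfSurjective X hXm hXs with he
  have heX : ∀ t, e t = X t := fun t => rfl
  have hX0 : X 0 = 0 := by simp [hX]
  have hY0 : e.symm 0 = 0 := by rw [OrderIso.symm_apply_eq, heX, hX0]
  have hYT : e.symm (X 1) = 1 := by rw [OrderIso.symm_apply_eq, heX]
  refine ⟨X 1, e.symm, ?_, e.symm.continuous, e.symm.strictMono, hY0, hYT, ?_⟩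
  · rw [← hX0]; exact hXm one_pos
  · intro x hx
    have hy : e.symm x ∈ Set.Ioo (0:ℝ) 1 := by
      constructor
      · rw [← hY0]; exact e.symm.strictMono hx.1
      · rw [← hYT]; exact e.symm.strictMono hx.2
    set y := e.symm x with hyd
    have hfc : ContinuousAt f y := by
      have h1 : ContinuousAt (fun t => (gq q t)⁻¹) y :=
        (gq_cont hq).continuousAt.inv₀ (gq_pos hq hy.1 hy.2).ne'
      refine h1.congr ?_
      filter_upwards [Ioo_mem_nhds hy.1 hy.2] with t ht
      exact (hf01 t ht).symm
    have hfm : StronglyMeasurableAtFilter f (nhds y) volume :=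
      ⟨Set.univ, Filter.univ_mem, by
        rw [Measure.restrict_univ]
        exact aestronglyMeasurable_const.add hkI.aestronglyMeasurable⟩
    have hXd : HasDerivAt X (f y) y :=
      intervalIntegral.integral_hasDerivAt_right (hfi 0 y) hfm hfc
    have := HasDerivAt.of_local_left_inverse (f := X) (g := e.symm) (a := x)
      e.symm.continuous.continuousAt hXd (hfpos y).ne'
      (Filter.Eventually.of_forall fun z => e.apply_symm_apply z)
    rw [hf01 y hy, inv_inv] at this
    exact this

lemma profile {q : ℝ} (hq : 1 < q) : ∃ (φ ψ : ℝ → ℝ) (J K : ℝ), Measurable ψ ∧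
    (∀ x, 0 ≤ φ x) ∧ Integrable φ ∧ (∀ a b : ℝ, φ b - φ a = ∫ x in a..b, ψ x) ∧
    MemLp ψ 2 (volume : Measure ℝ) ∧ ∫ x, φ x = 2 * J ∧ ∫ x, ψ x ^ 2 = 2 * Gq q 1 ∧
    ∫ x, φ x ^ q = 2 * K ∧ J - K = Gq q 1 ∧ 3 * J = (2 + q) * K := by
  obtain ⟨T, Y, hT, hYc, hYm, hY0, hYT, hYd⟩ := exists_Y hq
  have hq0 : 0 < q := by linarith
  have hpc : Continuous fun x : ℝ => x ^ q := Real.continuous_rpow_const hq0.le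
  have hg := gq_cont hq
  set φ : ℝ → ℝ := fun x => max 0 (Y (T - |x|)) with hφ
  have hφc : Continuous φ := by
    simp only [hφ]
    exact continuous_const.max (hYc.comp (by fun_prop))
  have hφ0 : ∀ x, 0 ≤ φ x := fun x => le_max_left _ _
  have hφ1 : ∀ x, φ x ≤ 1 := fun x => max_le zero_le_one (by
    rw [← hYT]; exact hYm.monotone (by linarith [abs_nonneg x]))
  have hφout : ∀ x, T ≤ |x| → φ x = 0 := fun x hx => max_eq_left (by
    rw [← hY0]; exact hYm.monotone (by linarith))
  have hYnn : ∀ s, 0 ≤ s → 0 ≤ Y s := fun s hs => by rw [← hY0]; exact hYm.monotone hs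
  have hYle : ∀ s, s ≤ T → Y s ≤ 1 := fun s hs => by rw [← hYT]; exact hYm.monotone hs
  have hφin : ∀ x, |x| ≤ T → φ x = Y (T - |x|) := fun x hx => max_eq_right
    (hYnn _ (by linarith))
  have hgen : ∀ h : ℝ → ℝ, Continuous h → h 0 = 0 →
      Integrable (fun x => h (φ x)) ∧ ∫ x, h (φ x) = 2 * ∫ s in (0:ℝ)..T, h (Y s) := by
    intro h hc h00
    constructor
    · refine (hc.comp hφc).integrable_of_hasCompactSupport ?_
      refine HasCompactSupport.intro (isCompact_Icc (a := -T) (b := T)) fun x hx => ?_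
      have : T ≤ |x| := by
        by_contra! hlt
        exact hx ⟨(abs_lt.1 hlt).1.le, (abs_lt.1 hlt).2.le⟩
      simp [hφout x this, h00]
    · have e1 : ∫ x, h (φ x) = 2 * ∫ x in Set.Ioi (0:ℝ), h (max 0 (Y (T - x))) :=
        integral_comp_abs (f := fun x => h (max 0 (Y (T - x))))
      have e2 : ∫ x in Set.Ioi (0:ℝ), h (max 0 (Y (T - x)))
          = ∫ x in Set.Ioc (0:ℝ) T, h (max 0 (Y (T - x))) := by
        apply setIntegral_eq_of_subset_of_forall_sdiff_eq_zero measurableSet_Ioi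
          Set.Ioc_subset_Ioi_self
        intro x hx
        have : T < x := by
          by_contra! hle
          exact hx.2 ⟨hx.1, hle⟩
        have : Y (T - x) ≤ 0 := by rw [← hY0]; exact hYm.monotone (by linarith)
        rw [max_eq_left this, h00]
      rw [e1, e2, ← intervalIntegral.integral_of_le hT.le,
        intervalIntegral.integral_comp_sub_left (fun x => h (max 0 (Y x)))]
      simp only [sub_self, sub_zero]
      congr 1
      apply intervalIntegral.integral_congr
      intro s hs
      rw [Set.uIcc_of_le hT.le] at hs
      simp only
      rw [max_eq_right (hYnn s hs.1)]
  set ψ : ℝ → ℝ := fun x => -(SignType.sign x : ℝ) * gq q (φ x) with hψ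
  have hψsq : ∀ x, ψ x ^ 2 = φ x - φ x ^ q := by
    intro x
    rw [← gq_sq hq (hφ0 x) (hφ1 x)]
    rcases lt_trichotomy x 0 with h | h | h
    · simp [hψ, sign_neg h]
    · have : φ x = 1 := by rw [hφin x (by simp [h, hT.le])]; simp [h, hYT]
      simp [hψ, this, gq_one]
    · simp [hψ, sign_pos h]
  have hφI : Integrable φ := (hgen id continuous_id rfl).1
  have hφqI : Integrable fun x => φ x ^ q := (hgen _ hpc (Real.zero_rpow hq0.ne')).1
  have hψmm : Measurable ψ := by
    have h1 : Measurable fun x : ℝ => (SignType.sign x : ℝ) := by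
      have : (fun x : ℝ => (SignType.sign x : ℝ)) = fun x => if x < 0 then -1 else if 0 < x then 1 else 0 := by
        ext x
        rcases lt_trichotomy x 0 with h | h | h
        · simp [sign_neg h, h]
        · simp [h]
        · simp [sign_pos h, h, h.le]
      rw [this]
      exact Measurable.ite measurableSet_Iio measurable_const
        (Measurable.ite measurableSet_Ioi measurable_const measurable_const)
    exact (h1.neg.mul (hg.comp hφc).measurable)
  have hψm : AEStronglyMeasurable ψ volume := hψmm.aestronglyMeasurable
  have hψL : MemLp ψ 2 volume := by
    rw [memLp_two_iff_integrable_sq hψm]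
    simp only [hψsq]
    exact hφI.sub hφqI
  have hψi : ∀ a b, IntervalIntegrable ψ volume a b := fun a b =>
    ((hψL.locallyIntegrable (by norm_num)).integrableOn_isCompact
      isCompact_uIcc).intervalIntegrable
  have hYi : ∀ h : ℝ → ℝ, Continuous h → IntervalIntegrable (fun s => h (Y s)) volume 0 T :=
    fun h hc => (hc.comp hYc).intervalIntegrable _ _
  have hY01 : ∀ x ∈ Set.Ioo 0 T, Y x ∈ Set.Ioo (0:ℝ) 1 := fun x hx =>
    ⟨by rw [← hY0]; exact hYm hx.1, by rw [← hYT]; exact hYm hx.2⟩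
  have hJK : (∫ s in (0:ℝ)..T, Y s) - (∫ s in (0:ℝ)..T, Y s ^ q) = Gq q 1 := by
    rw [← intervalIntegral.integral_sub (hYi (fun t => t) continuous_id) (hYi _ hpc)]
    have := intervalIntegral.integral_eq_sub_of_hasDerivAt_of_le hT.le
      (f := fun x => Gq q (Y x)) (f' := fun x => Y x - Y x ^ q)
      ((Gq_cont hq).comp hYc).continuousOn (fun x hx => by
        have := (Gq_deriv hq (Y x)).comp x (hYd x hx)
        rw [← sq, gq_sq hq (hY01 x hx).1.le (hY01 x hx).2.le] at this
        exact this) (hYi (fun t => t - t ^ q) (continuous_id.sub hpc))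
    rw [this, hYT, hY0]
    simp [Gq]
  have hvir : (3 / 2) * (∫ s in (0:ℝ)..T, Y s) - (1 + q / 2) * (∫ s in (0:ℝ)..T, Y s ^ q) = 0 := by
    rw [← intervalIntegral.integral_const_mul, ← intervalIntegral.integral_const_mul,
      ← intervalIntegral.integral_sub ((hYi (fun t => t) continuous_id).const_mul _) ((hYi _ hpc).const_mul _)]
    have := intervalIntegral.integral_eq_sub_of_hasDerivAt_of_le hT.le
      (f := fun x => Y x * gq q (Y x)) (f' := fun x => (3/2) * Y x - (1 + q / 2) * Y x ^ q)
      (hYc.mul (hg.comp hYc)).continuousOn (fun x hx => by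
        have hy := hY01 x hx
        have hgp := gq_pos hq hy.1 hy.2
        have hne : Y x - Y x ^ q ≠ 0 := (Real.sqrt_pos.1 hgp).ne'
        have d1 : HasDerivAt (fun t : ℝ => t - t ^ q) (1 - q * Y x ^ (q - 1)) (Y x) :=
          (hasDerivAt_id _).sub (Real.hasDerivAt_rpow_const (Or.inl hy.1.ne'))
        have d2 : HasDerivAt (gq q) ((1 - q * Y x ^ (q - 1)) / (2 * gq q (Y x))) (Y x) :=
          d1.sqrt hne
        have d3 := (hYd x hx).mul (d2.comp x (hYd x hx))
        refine d3.congr_deriv ?_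
        have e1 : Y x ^ (q - 1) = Y x ^ q / Y x := by
          rw [Real.rpow_sub hy.1, Real.rpow_one]
        have e2 := gq_sq hq hy.1.le hy.2.le
        have hy0 := hy.1.ne'
        simp only [Function.comp]
        rw [e1, ← sq, e2]
        field_simp
        ring) (hYi (fun t => (3/2) * t - (1 + q/2) * t ^ q)
          ((continuous_const.mul continuous_id).sub (continuous_const.mul hpc)))
    rw [← sub_eq_zero] at this
    rw [hYT, hY0, gq_one] at this
    linarith
  refine ⟨φ, ψ, ∫ s in (0:ℝ)..T, Y s, ∫ s in (0:ℝ)..T, Y s ^ q, hψmm, hφ0, hφI, ?_, hψL,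
    (hgen id continuous_id rfl).2, ?_, (hgen _ hpc (Real.zero_rpow hq0.ne')).2, hJK, by linarith⟩
  · intro a b
    symm
    apply MeasureTheory.integral_eq_of_hasDerivAt_off_countable φ ψ (s := {-T, 0, T})
      (Set.toFinite _).countable hφc.continuousOn _ (hψi a b)
    rintro x ⟨-, hx⟩
    simp only [Set.mem_insert_iff, Set.mem_singleton_iff, not_or] at hx
    obtain ⟨hx1, hx2, hx3⟩ := hx
    rcases lt_or_ge T |x| with h | h
    · have : ψ x = 0 := by simp [hψ, hφout x h.le, gq_zero hq]
      rw [this]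
      refine (hasDerivAt_const x (0:ℝ)).congr_of_eventuallyEq ?_
      filter_upwards [continuous_abs.continuousAt.eventually (lt_mem_nhds h)] with y hy
      exact hφout y (le_of_lt hy)
    · have h' : |x| < T := lt_of_le_of_ne h (by
        intro he
        rcases abs_choice x with hc | hc
        · exact hx3 (hc ▸ he)
        · apply hx1; linarith)
      have hin : T - |x| ∈ Set.Ioo 0 T := ⟨by linarith, by linarith [abs_pos.2 hx2]⟩
      have d1 : HasDerivAt (fun y : ℝ => T - |y|) (-(SignType.sign x : ℝ)) x := by
        simpa using (hasDerivAt_abs hx2).const_sub T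
      have d2 := (hYd _ hin).comp x d1
      have : ψ x = gq q (Y (T - |x|)) * -(SignType.sign x : ℝ) := by
        simp only [hψ]; rw [hφin x h]; ring
      rw [this]
      refine d2.congr_of_eventuallyEq ?_
      filter_upwards [continuous_abs.continuousAt.eventually (gt_mem_nhds h')] with y hy
      exact hφin y (le_of_lt hy)
  · simp only [hψsq]
    have h1 := (hgen id continuous_id rfl).2
    have h2 := (hgen _ hpc (Real.zero_rpow hq0.ne')).2
    simp only [id] at h1
    rw [integral_sub hφI hφqI, h1, h2, ← hJK]
    ring

lemma young {q I J x : ℝ} (hq : 1 < q) (hq4 : q < 4) (hI : 0 < I)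
    (hJ : J * (q - 1) = (q + 2) * I) (hx : 0 < x) :
    2 * I - J ≤ 2 * I * x ^ (1 + q / 2) - J * x ^ (q - 1) := by
  have hb : 0 < q - 1 := by linarith
  have h1 : 1 ≤ (1 + q / 2) / (q - 1) := by
    rw [le_div_iff₀ hb]; linarith
  have hy : 0 < x ^ (q - 1) := Real.rpow_pos_of_pos hx _
  have h2 := one_add_mul_self_le_rpow_one_add (s := x ^ (q - 1) - 1) (by linarith) h1
  have e : (1 + (x ^ (q - 1) - 1)) ^ ((1 + q / 2) / (q - 1)) = x ^ (1 + q / 2) := by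
    rw [show 1 + (x ^ (q - 1) - 1) = x ^ (q - 1) by ring, ← Real.rpow_mul hx.le]
    congr 1; field_simp
  rw [e] at h2
  have hJ' : J = 2 * I * ((1 + q / 2) / (q - 1)) := by
    field_simp; linarith
  have h3 := mul_le_mul_of_nonneg_left h2 (by linarith : 0 ≤ 2 * I)
  rw [hJ']
  linarith

/-- for 2 < p < 8 and m > 0, the minimization of
𝓗(ρ) = (1/8)∫(ρ')² − (1/p)∫ρ^{p/2} over nonnegative integrable locally absolutely
continuous ρ with ρ' ∈ L² and ∫ρ = m admits a minimizer. -/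
theorem stmt_15 (p m : ℝ) (hp1 : 2 < p) (hp2 : p < 8) (hm : 0 < m) :
    ∃ (ρs ρs' : ℝ → ℝ),
      ((∀ x, 0 ≤ ρs x) ∧
        Integrable ρs ∧
        (∀ a b : ℝ, ρs b - ρs a = ∫ x in a..b, ρs' x) ∧
        MemLp ρs' 2 (volume : Measure ℝ) ∧
        (∫ x, ρs x) = m) ∧
      ∀ (ρ ρ' : ℝ → ℝ),
        (∀ x, 0 ≤ ρ x) →
        Integrable ρ →
        (∀ a b : ℝ, ρ b - ρ a = ∫ x in a..b, ρ' x) →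
        MemLp ρ' 2 (volume : Measure ℝ) →
        (∫ x, ρ x) = m →
        (1 / 8) * (∫ x, (ρs' x) ^ 2) - (1 / p) * (∫ x, ρs x ^ (p / 2)) ≤
          (1 / 8) * (∫ x, (ρ' x) ^ 2) - (1 / p) * (∫ x, ρ x ^ (p / 2)) := by
  obtain ⟨q, rfl⟩ : ∃ q, p = 2 * q := ⟨p / 2, by ring⟩
  have e2q : 2 * q / 2 = q := by ring
  rw [e2q]
  have hq : 1 < q := by linarith
  have hq4 : q < 4 := by linarith
  have hq0 : 0 < q := by linarith
  obtain ⟨φ, ψ, J, K, hψm, hφ0, hφI, hφd, hψL, hφint, hψint, hφq, hJK, hvir⟩ := profile hq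
  have hI := Gq_one_pos hq
  set I := Gq q 1 with hIdef
  have hKpos : 0 < K := by
    have : K * (q - 1) = 3 * I := by linarith
    by_contra! h
    nlinarith
  have hJpos : 0 < J := by linarith
  have hJq : J * (q - 1) = (q + 2) * I := by
    have : K = J - I := by linarith
    rw [this] at hvir; linarith
  set s := √(q / 4) with hs
  have hspos : 0 < s := Real.sqrt_pos.2 (by positivity)
  have hs2 : s ^ 2 = q / 4 := Real.sq_sqrt (by positivity)
  have hr : 0 < 2 - q / 2 := by linarith
  obtain ⟨a, ha, ham⟩ : ∃ a : ℝ, 0 < a ∧ a ^ (2 - q / 2) * s * (2 * J) = m := by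
    refine ⟨(m / (s * (2 * J))) ^ (2 - q / 2)⁻¹, by positivity, ?_⟩
    rw [Real.rpow_inv_rpow (by positivity) hr.ne']
    field_simp
  set b := a ^ (q / 2) with hb
  have hbpos : 0 < b := Real.rpow_pos_of_pos ha _
  have hbq : a ^ q = b ^ 2 := by
    rw [hb, ← Real.rpow_natCast, ← Real.rpow_mul ha.le]; congr 1; push_cast; ring
  have ham' : a ^ 2 / b * s * (2 * J) = m := by
    rw [← ham, Real.rpow_sub ha, hb]; simp
  set l := s * (a / b) with hl
  have hlpos : 0 < l := by positivity
  refine ⟨fun x => a * φ (x / l), fun x => a / l * ψ (x / l), ⟨?_, ?_, ?_, ?_, ?_⟩, ?_⟩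
  · intro x; exact mul_nonneg ha.le (hφ0 _)
  · exact (hφI.comp_div hlpos.ne').const_mul a
  · intro c d
    rw [intervalIntegral.integral_const_mul, intervalIntegral.integral_comp_div _ hlpos.ne',
      ← hφd, smul_eq_mul]
    field_simp
  · have hmeas : Measurable fun x => a / l * ψ (x / l) :=
      (hψm.comp (measurable_id.div_const l)).const_mul _
    rw [memLp_two_iff_integrable_sq hmeas.aestronglyMeasurable]
    simp only [mul_pow]
    exact (hψL.integrable_sq.comp_div hlpos.ne').const_mul _
  · rw [integral_const_mul, Measure.integral_comp_div, hφint, abs_of_pos hlpos, smul_eq_mul, ← ham',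
      hl]
    field_simp
  · intro ρ ρ' h0 hInt hd hL hmass
    obtain ⟨M, hM, hlow⟩ := lower hq hm h0 hInt hd hL hmass
    refine le_trans ?_ hlow
    have i1 : ∫ x, (a / l * ψ (x / l)) ^ 2 = (a / l) ^ 2 * (l * (2 * I)) := by
      simp only [mul_pow]
      rw [integral_const_mul, Measure.integral_comp_div (fun x => ψ x ^ 2), hψint,
        abs_of_pos hlpos, smul_eq_mul]
    have i2 : ∫ x, (a * φ (x / l)) ^ q = a ^ q * (l * (2 * K)) := by
      simp only [Real.mul_rpow ha.le (hφ0 _)]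
      rw [integral_const_mul, Measure.integral_comp_div (fun x => φ x ^ q), hφq,
        abs_of_pos hlpos, smul_eq_mul]
    rw [i1, i2]
    obtain ⟨x, hx, rfl⟩ : ∃ x, 0 < x ∧ M = a * x := ⟨M / a, by positivity, by field_simp⟩
    have hy := young hq hq4 hI hJq hx
    have hxq : x ^ q = (x ^ (q / 2)) ^ 2 := by
      rw [← Real.rpow_natCast, ← Real.rpow_mul hx.le]; congr 1; push_cast; ring
    have e1 : √((a * x) ^ q / (4 * q)) = b * x ^ (q / 2) * (s / q) := by
      rw [Real.sqrt_eq_iff_mul_self_eq (by positivity) (by positivity), Real.mul_rpow ha.le hx.le, hbq, hxq]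
      have : q = 4 * s ^ 2 := by linarith
      field_simp
      rw [this]
    have e3 : (a * x) ^ (q - 1) = b ^ 2 / a * x ^ (q - 1) := by
      rw [Real.mul_rpow ha.le hx.le, Real.rpow_sub ha, hbq, Real.rpow_one]
    have e4 : x ^ (1 + q / 2) = x * x ^ (q / 2) := by
      rw [Real.rpow_add hx, Real.rpow_one]
    rw [e1, e3, hbq, ← ham']
    rw [e4] at hy
    have hS : 0 < a * b * s / q := by positivity
    have hfin := mul_le_mul_of_nonneg_left hy hS.le
    have hs2' : q = 4 * s ^ 2 := by linarith
    have l1 : 1 / 8 * ((a / l) ^ 2 * (l * (2 * I))) - 1 / (2 * q) * (b ^ 2 * (l * (2 * K)))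
        = a * b * s / q * (2 * I - J) := by
      have : J = I + K := by linarith
      rw [this, hl]
      have : a * b * s / q = a * b / (4 * s) := by rw [hs2']; field_simp
      have h2 : (1:ℝ) / (2 * q) = 1 / (8 * s ^ 2) := by rw [hs2']; ring
      rw [this, h2]
      field_simp
      ring
    rw [l1]
    refine hfin.trans (le_of_eq ?_)
    rw [← hIdef]
    field_simp
end

section
/- Let m > 0 and set c = m/(√2·π). Define ρ*(x) = 2c·cos²(x/√2) for |x| ≤ π/√2 and ρ*(x) = 0 otherwise. Then ρ* is nonnegative, continuously differentiable on ℝ, satisfies ∫ρ* dx = m, and for every nonnegative, integrable, locally absolutely continuous ρ : ℝ → ℝ with ∫ρ dx = m and ρ' ∈ L²(ℝ), one has 𝓗(ρ*) ≤ 𝓗(ρ), where 𝓗(σ) = (1/8)∫(σ'(x))² dx − (1/4)∫σ(x)² dx. Moreover 𝓗(ρ*) = −m²/(4√2·π). -/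
open MeasureTheory
open Set Filter Topology

lemma li_ii {g : ℝ → ℝ} (hg : LocallyIntegrable g) (x y : ℝ) :
    IntervalIntegrable g volume x y :=
  intervalIntegrable_iff.mpr <|
    (hg.integrableOn_isCompact isCompact_uIcc).mono_set uIoc_subset_uIcc

lemma hl_cont {f g : ℝ → ℝ} (hg : LocallyIntegrable g)
    (hf : ∀ a b : ℝ, f b - f a = ∫ x in a..b, g x) : Continuous f := by
  have h1 : f = fun x => f 0 + ∫ t in (0:ℝ)..x, g t := by
    funext x; rw [← hf 0 x]; ring
  rw [h1]
  exact continuous_const.add (intervalIntegral.continuous_primitive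
    (li_ii hg) 0)

lemma hl_aux {f g : ℝ → ℝ} (hg : LocallyIntegrable g)
    (hg2 : Integrable (fun x => g x ^ 2))
    (hf : ∀ a b : ℝ, f b - f a = ∫ x in a..b, g x)
    (a T ω : ℝ) (hT : 0 < T) (hω : 0 < ω) (hωT : ω * T < Real.pi / 2) :
    ω ^ 2 * ∫ x in a..(a + T), (f x - f a) ^ 2 ≤ ∫ x in a..(a + T), g x ^ 2 := by
  have hab : a ≤ a + T := by linarith
  set b := a + T with hb
  have hfc := hl_cont hg hf
  have hcos : ∀ x ∈ Icc a b, Real.cos (ω * (b - x)) ≠ 0 := by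
    intro x hx
    apply ne_of_gt
    apply Real.cos_pos_of_mem_Ioo
    constructor
    · have : 0 ≤ ω * (b - x) := mul_nonneg hω.le (by linarith [hx.2])
      linarith [Real.pi_pos]
    · have : ω * (b - x) ≤ ω * T := by
        apply mul_le_mul_of_nonneg_left _ hω.le
        linarith [hx.1]
      linarith
  let φ : ℝ → ℝ := fun x => ω * Real.tan (ω * (b - x))
  have hφd : ∀ x ∈ Icc a b, HasDerivAt φ (-(ω ^ 2 + φ x ^ 2)) x := by
    intro x hx
    have h1 := Real.hasDerivAt_tan (hcos x hx)
    have h2 : HasDerivAt (fun x => ω * (b - x)) (ω * (-1)) x :=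
      ((hasDerivAt_id x).const_sub b).const_mul ω
    have h3 := (h1.comp x h2).const_mul ω
    have h4 : HasDerivAt φ (ω * (1 / Real.cos (ω * (b - x)) ^ 2 * (ω * (-1)))) x := h3
    convert h4 using 1
    change -(ω ^ 2 + (ω * Real.tan (ω * (b - x))) ^ 2) = _
    rw [Real.tan_eq_sin_div_cos]
    have hc := hcos x hx
    field_simp
    nlinarith [Real.sin_sq_add_cos_sq (ω * (b - x))]
  have hφ : AbsolutelyContinuousOnInterval φ a b := by
    apply ContDiffOn.absolutelyContinuousOnInterval
    rw [uIcc_of_le hab]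
    intro x hx
    apply ContDiffAt.contDiffWithinAt
    apply contDiffAt_const.mul
    have h1 : ContDiffAt ℝ 1 Real.tan (ω * (b - x)) := Real.contDiffAt_tan.2 (hcos x hx)
    exact h1.comp x (f := fun x => ω * (b - x)) (by fun_prop)
  let h : ℝ → ℝ := fun x => f x - f a
  have hh : AbsolutelyContinuousOnInterval h a b := by
    have := (li_ii hg a b).absolutelyContinuousOnInterval_intervalIntegral
      (c := a) left_mem_uIcc
    have e : h = fun x => ∫ t in a..x, g t := by
      funext x; exact hf a x
    rw [e]; exact this
  have hF := hφ.fun_mul (hh.fun_mul hh)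
  have hFTC := hF.integral_deriv_eq_sub
  have hae : ∀ᵐ x, HasDerivAt h (g x) x := by
    filter_upwards [_root_.LocallyIntegrable.ae_hasDerivAt_integral hg] with x hx
    have e : h = fun x => ∫ t in a..x, g t := by
      funext x; exact hf a x
    rw [e]; exact hx a
  have hle : ∫ x in a..b, deriv (fun x => φ x * (h x * h x)) x ≤
      ∫ x in a..b, (g x ^ 2 - ω ^ 2 * h x ^ 2) := by
    apply intervalIntegral.integral_mono_ae_restrict hab hF.intervalIntegrable_deriv
    · apply hg2.intervalIntegrable.sub
      apply Continuous.intervalIntegrable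
      fun_prop
    · filter_upwards [ae_restrict_of_ae hae, ae_restrict_mem measurableSet_Icc] with x hx hxm
      have := ((hφd x hxm).mul (hx.mul hx))
      have e := this.deriv
      change deriv (fun x => φ x * (h x * h x)) x = _ at e
      rw [e]
      simp only [Pi.mul_apply]
      nlinarith [sq_nonneg (g x - φ x * h x)]
  rw [hFTC, intervalIntegral.integral_sub hg2.intervalIntegrable
    (Continuous.intervalIntegrable (by fun_prop) _ _),
    intervalIntegral.integral_const_mul] at hle
  have e1 : φ b = 0 := by simp [φ]
  have e2 : h a = 0 := by simp [h]
  rw [e1, e2] at hle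
  simp only [h] at hle
  linarith

lemma hl_half {f g : ℝ → ℝ} (hg : LocallyIntegrable g)
    (hg2 : Integrable (fun x => g x ^ 2))
    (hf : ∀ a b : ℝ, f b - f a = ∫ x in a..b, g x)
    (a T ω : ℝ) (hT : 0 < T) (hω : 0 < ω) (hωT : ω * T = Real.pi / 2) :
    ω ^ 2 * ∫ x in a..(a + T), (f x - f a) ^ 2 ≤ ∫ x in a..(a + T), g x ^ 2 := by
  have ht : Tendsto (fun w : ℝ => w ^ 2 * ∫ x in a..(a + T), (f x - f a) ^ 2) (𝓝[<] ω)
      (𝓝 (ω ^ 2 * ∫ x in a..(a + T), (f x - f a) ^ 2)) := by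
    apply Tendsto.mono_left _ nhdsWithin_le_nhds
    apply Continuous.tendsto
    fun_prop
  apply le_of_tendsto ht
  filter_upwards [Ioo_mem_nhdsLT hω] with w hw
  apply hl_aux hg hg2 hf a T w hT hw.1
  rw [← hωT]
  exact mul_lt_mul_of_pos_right hw.2 hT

lemma refl_hyp {f g : ℝ → ℝ} 
    (hf : ∀ a b : ℝ, f b - f a = ∫ x in a..b, g x) :
    ∀ a b : ℝ, f (-b) - f (-a) = ∫ x in a..b, -g (-x) := by
  intro a b
  rw [intervalIntegral.integral_neg, intervalIntegral.integral_comp_neg (fun x => g x), ← hf]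
  ring

lemma hl_half' {f g : ℝ → ℝ} (hg : MemLp g 2)
    (hf : ∀ a b : ℝ, f b - f a = ∫ x in a..b, g x)
    (a T ω : ℝ) (hT : 0 < T) (hω : 0 < ω) (hωT : ω * T = Real.pi / 2) :
    ω ^ 2 * ∫ x in (a - T)..a, (f x - f a) ^ 2 ≤ ∫ x in (a - T)..a, g x ^ 2 := by
  have hg' : MemLp (fun x => - g (-x)) 2 :=
    (hg.comp_measurePreserving (Measure.measurePreserving_neg volume)).neg
  have := hl_half (f := fun x => f (-x)) (g := fun x => - g (-x))
    (hg'.locallyIntegrable (by norm_num)) hg'.integrable_sq (refl_hyp hf) (-a) T ω hT hω hωT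
  rw [intervalIntegral.integral_comp_neg (fun x => (f x - f (- -a)) ^ 2)] at this
  simp only [neg_sq] at this
  rw [intervalIntegral.integral_comp_neg (fun x => (g x) ^ 2)] at this
  simpa [sub_eq_add_neg, add_comm] using this

/-- one cell -/
lemma cell {f g : ℝ → ℝ} (hg : MemLp g 2)
    (hf : ∀ a b : ℝ, f b - f a = ∫ x in a..b, g x)
    (a l : ℝ) (hl : l = Real.pi / Real.sqrt 2) :
    2 * (∫ x in a..(a + l), f x ^ 2) - (2 / l) * (∫ x in a..(a + l), f x) ^ 2
      ≤ ∫ x in a..(a + l), g x ^ 2 := by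
  have h2 : 0 < Real.sqrt 2 := by positivity
  have hlp : 0 < l := by rw [hl]; positivity
  have hω : Real.sqrt 2 * (l / 2) = Real.pi / 2 := by rw [hl]; field_simp
  have hloc := hg.locallyIntegrable (by norm_num)
  have hfc := hl_cont hloc hf
  have hA := hl_half hloc hg.integrable_sq hf (a + l / 2) (l / 2) _ (by positivity) h2 hω
  have hB := hl_half' hg hf (a + l / 2) (l / 2) _ (by positivity) h2 hω
  set k := f (a + l / 2)
  rw [show a + l / 2 + l / 2 = a + l by ring] at hA
  rw [show a + l / 2 - l / 2 = a by ring] at hB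
  rw [Real.sq_sqrt (by norm_num)] at hA hB
  have i1 := intervalIntegral.integral_add_adjacent_intervals (μ := volume)
    (f := fun x => (f x - k) ^ 2) (a := a) (b := a + l / 2) (c := a + l)
    (Continuous.intervalIntegrable (by fun_prop) _ _)
    (Continuous.intervalIntegrable (by fun_prop) _ _)
  have i2 := intervalIntegral.integral_add_adjacent_intervals (μ := volume)
    (f := fun x => g x ^ 2) (a := a) (b := a + l / 2) (c := a + l)
    hg.integrable_sq.intervalIntegrable hg.integrable_sq.intervalIntegrable
  have i3 : ∫ x in a..(a + l), (f x - k) ^ 2 =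
      (∫ x in a..(a + l), f x ^ 2) - 2 * k * (∫ x in a..(a + l), f x) + k ^ 2 * l := by
    have : ∀ x, (f x - k) ^ 2 = f x ^ 2 - 2 * k * f x + k ^ 2 := fun x => by ring
    simp_rw [this]
    rw [intervalIntegral.integral_add, intervalIntegral.integral_sub,
      intervalIntegral.integral_const_mul, intervalIntegral.integral_const]
    · simp; ring
    all_goals exact Continuous.intervalIntegrable (by fun_prop) _ _
  set M := ∫ x in a..(a + l), f x
  have i4 : 0 ≤ (1 / l) * (M - k * l) ^ 2 := by positivity
  have i5 : (1 / l) * (M - k * l) ^ 2 = M ^ 2 / l - 2 * k * M + k ^ 2 * l := by field_simp; ring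
  have i6 : 2 / l * M ^ 2 = 2 * (M ^ 2 / l) := by ring
  linarith

lemma halfline {f g : ℝ → ℝ} (hg : MemLp g 2)
    (hf : ∀ a b : ℝ, f b - f a = ∫ x in a..b, g x)
    (h0 : ∀ x, 0 ≤ f x) (hi : Integrable f) (hi2 : Integrable (fun x => f x ^ 2))
    (a l : ℝ) (hl : l = Real.pi / Real.sqrt 2) :
    2 * (∫ x in Ioi a, f x ^ 2) - (2 / l) * (∫ x in Ioi a, f x) ^ 2
      ≤ ∫ x in Ioi a, g x ^ 2 := by
  have hlp : 0 < l := by rw [hl]; positivity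
  have htop : Tendsto (fun n : ℕ => a + n * l) atTop atTop :=
    tendsto_atTop_add_const_left _ _ (tendsto_natCast_atTop_atTop.atTop_mul_const hlp)
  have t1 := intervalIntegral_tendsto_integral_Ioi a hi.integrableOn htop
  have t2 := intervalIntegral_tendsto_integral_Ioi a hi2.integrableOn htop
  have t3 := intervalIntegral_tendsto_integral_Ioi a hg.integrable_sq.integrableOn htop
  refine le_of_tendsto_of_tendsto ((t2.const_mul 2).sub ((t1.pow 2).const_mul (2 / l))) t3 ?_
  refine Eventually.of_forall fun n => ?_
  have s1 := intervalIntegral.sum_integral_adjacent_intervals (μ := volume) (f := f) (n := n)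
    (a := fun k : ℕ => a + k * l) (fun _ _ => hi.intervalIntegrable)
  have s2 := intervalIntegral.sum_integral_adjacent_intervals (μ := volume)
    (f := fun x => f x ^ 2) (n := n)
    (a := fun k : ℕ => a + k * l) (fun _ _ => hi2.intervalIntegrable)
  have s3 := intervalIntegral.sum_integral_adjacent_intervals (μ := volume)
    (f := fun x => g x ^ 2) (n := n)
    (a := fun k : ℕ => a + k * l) (fun _ _ => hg.integrable_sq.intervalIntegrable)
  have hs : ∀ k : ℕ, a + ((k + 1 : ℕ) : ℝ) * l = a + k * l + l := by
    intro k; push_cast; ring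
  simp only [hs] at s1 s2 s3
  simp only [Nat.cast_zero, zero_mul, add_zero] at s1 s2 s3
  dsimp only
  rw [← s1, ← s2, ← s3]
  have hsq : ∑ k ∈ Finset.range n, (∫ x in (a + k * l)..(a + k * l + l), f x) ^ 2 ≤
      (∑ k ∈ Finset.range n, ∫ x in (a + k * l)..(a + k * l + l), f x) ^ 2 := by
    apply Finset.sum_sq_le_sq_sum_of_nonneg
    intro k _
    exact intervalIntegral.integral_nonneg (by linarith) (fun x _ => h0 x)
  calc _ ≤ 2 * ∑ k ∈ Finset.range n, (∫ x in (a + k * l)..(a + k * l + l), f x ^ 2)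
        - 2 / l * ∑ k ∈ Finset.range n, (∫ x in (a + k * l)..(a + k * l + l), f x) ^ 2 := by
        gcongr
    _ = ∑ k ∈ Finset.range n, (2 * (∫ x in (a + k * l)..(a + k * l + l), f x ^ 2)
        - 2 / l * (∫ x in (a + k * l)..(a + k * l + l), f x) ^ 2) := by
        rw [Finset.sum_sub_distrib, Finset.mul_sum, Finset.mul_sum]
    _ ≤ _ := Finset.sum_le_sum fun k _ => cell hg hf _ l hl

lemma median {f : ℝ → ℝ} (hi : Integrable f) (m : ℝ) (hm : 0 < m) (h : ∫ x, f x = m) :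
    ∃ a, ∫ x in Ioi a, f x = m / 2 := by
  have e : ∀ a, ∫ x in Ioi a, f x = (∫ x in Ioi (0:ℝ), f x) - ∫ x in (0:ℝ)..a, f x := by
    intro a
    have := intervalIntegral.integral_interval_add_Ioi (a := 0) (b := a) (μ := volume)
      hi.integrableOn hi.integrableOn
    linarith
  have e' : ∀ a, ∫ x in Iic a, f x = m - ∫ x in Ioi a, f x := by
    intro a
    have := intervalIntegral.integral_Iic_add_Ioi (b := a) (μ := volume)
      hi.integrableOn hi.integrableOn
    linarith
  have hc : Continuous (fun a => ∫ x in Ioi a, f x) := by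
    rw [funext e]
    exact continuous_const.sub (intervalIntegral.continuous_primitive
      (fun a b => hi.intervalIntegrable) 0)
  have t1 := intervalIntegral_tendsto_integral_Ioi 0 hi.integrableOn tendsto_id
  have t2 := intervalIntegral_tendsto_integral_Iic 0 hi.integrableOn tendsto_id
  have u1 : Tendsto (fun a => ∫ x in Ioi a, f x) atTop (𝓝 0) := by
    rw [funext e]; simpa using t1.const_sub (∫ x in Ioi (0:ℝ), f x)
  have u2 : Tendsto (fun a => ∫ x in Ioi a, f x) atBot (𝓝 m) := by
    have := t2.const_add (∫ x in Ioi (0:ℝ), f x)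
    rw [e' 0] at this
    rw [funext e]
    have q : ∀ a, (∫ x in Ioi (0:ℝ), f x) - ∫ x in (0:ℝ)..a, f x =
        (∫ x in Ioi (0:ℝ), f x) + ∫ x in a..(0:ℝ), f x := fun a => by
      rw [intervalIntegral.integral_symm a 0]; ring
    rw [funext q]
    simpa using this
  exact mem_range_of_exists_le_of_exists_ge hc
    ((u1.eventually_le_const (by linarith)).exists)
    ((u2.eventually_const_le (by linarith)).exists)

lemma main_ineq {f g : ℝ → ℝ} (hg : MemLp g 2)
    (hf : ∀ a b : ℝ, f b - f a = ∫ x in a..b, g x)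
    (h0 : ∀ x, 0 ≤ f x) (hi : Integrable f) (m : ℝ) (hm : 0 < m) (h : ∫ x, f x = m) :
    -(m ^ 2) / (4 * Real.sqrt 2 * Real.pi) ≤
      (1 / 8) * (∫ x, (g x) ^ 2) - (1 / 4) * (∫ x, (f x) ^ 2) := by
  by_cases hi2 : Integrable (fun x => f x ^ 2)
  · obtain ⟨a, ha⟩ := median hi m hm h
    set l := Real.pi / Real.sqrt 2 with hl
    have A := halfline hg hf h0 hi hi2 a l hl
    have hg' : MemLp (fun x => - g (-x)) 2 :=
      (hg.comp_measurePreserving (Measure.measurePreserving_neg volume)).neg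
    have B := halfline hg' (refl_hyp hf) (fun x => h0 (-x)) hi.comp_neg hi2.comp_neg (-a) l hl
    simp only [neg_sq] at B
    rw [integral_comp_neg_Ioi (-a) f, integral_comp_neg_Ioi (-a) (fun x => f x ^ 2),
      integral_comp_neg_Ioi (-a) (fun x => g x ^ 2), neg_neg] at B
    have j1 := intervalIntegral.integral_Iic_add_Ioi (b := a) (μ := volume)
      hi.integrableOn hi.integrableOn
    have j2 := intervalIntegral.integral_Iic_add_Ioi (b := a) (μ := volume)
      hi2.integrableOn hi2.integrableOn
    have j3 := intervalIntegral.integral_Iic_add_Ioi (b := a) (μ := volume)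
      hg.integrable_sq.integrableOn hg.integrable_sq.integrableOn
    have ha' : ∫ x in Iic a, f x = m / 2 := by linarith
    rw [ha] at A
    rw [ha'] at B
    have : -(m ^ 2) / (4 * Real.sqrt 2 * Real.pi) = - (1 / 8) * (2 * (2 / l * (m / 2) ^ 2)) := by
      rw [hl]
      have := Real.sq_sqrt (show (0:ℝ) ≤ 2 by norm_num)
      field_simp
      linarith
    rw [this]
    linarith
  · rw [integral_undef hi2]
    have h1 : 0 ≤ ∫ x, (g x) ^ 2 := integral_nonneg fun x => sq_nonneg _
    have h2 : -(m ^ 2) / (4 * Real.sqrt 2 * Real.pi) ≤ 0 := by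
      rw [neg_div]
      have : 0 ≤ m ^ 2 / (4 * Real.sqrt 2 * Real.pi) := by positivity
      linarith
    linarith

lemma star_integral (F : ℝ → ℝ) (l : ℝ) (hl : 0 < l) :
    ∫ x, (if |x| ≤ l then F x else 0) = ∫ x in (-l)..l, F x := by
  rw [intervalIntegral.integral_of_le (by linarith), ← integral_Icc_eq_integral_Ioc,
    ← integral_indicator measurableSet_Icc]
  congr 1
  funext x
  simp only [indicator, mem_Icc, abs_le]

lemma int_cos (l : ℝ) (hl : l = Real.pi / Real.sqrt 2) :
    ∫ x in (-l)..l, Real.cos (Real.sqrt 2 * x) = 0 := by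
  have e : Real.sqrt 2 * l = Real.pi := by rw [hl]; field_simp
  rw [intervalIntegral.integral_comp_mul_left (fun x => Real.cos x) (by positivity),
    mul_neg, e, integral_cos]
  simp

lemma int_cos_sq (l : ℝ) (hl : l = Real.pi / Real.sqrt 2) :
    ∫ x in (-l)..l, Real.cos (Real.sqrt 2 * x) ^ 2 = l := by
  have e : Real.sqrt 2 * l = Real.pi := by rw [hl]; field_simp
  rw [intervalIntegral.integral_comp_mul_left (fun x => Real.cos x ^ 2) (by positivity),
    mul_neg, e, integral_cos_sq]
  simp
  rw [hl]
  field_simp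

theorem stmt_16 (m : ℝ) (hm : 0 < m) (c : ℝ) (hc : c = m / (Real.sqrt 2 * Real.pi))
    (ρs : ℝ → ℝ)
    (hρs : ∀ x, ρs x = if |x| ≤ Real.pi / Real.sqrt 2
      then 2 * c * Real.cos (x / Real.sqrt 2) ^ 2 else 0) :
    (∀ x, 0 ≤ ρs x) ∧
    ContDiff ℝ 1 ρs ∧
    (∫ x, ρs x) = m ∧
    (∀ (ρ ρ' : ℝ → ℝ),
      (∀ x, 0 ≤ ρ x) →
      Integrable ρ →
      (∀ a b : ℝ, ρ b - ρ a = ∫ x in a..b, ρ' x) →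
      MemLp ρ' 2 (volume : Measure ℝ) →
      (∫ x, ρ x) = m →
      (1 / 8) * (∫ x, (deriv ρs x) ^ 2) - (1 / 4) * (∫ x, (ρs x) ^ 2) ≤
        (1 / 8) * (∫ x, (ρ' x) ^ 2) - (1 / 4) * (∫ x, (ρ x) ^ 2)) ∧
    (1 / 8) * (∫ x, (deriv ρs x) ^ 2) - (1 / 4) * (∫ x, (ρs x) ^ 2)
      = -(m ^ 2) / (4 * Real.sqrt 2 * Real.pi) := by
  have hcpos : 0 < c := by rw [hc]; positivity
  have h22 := Real.sq_sqrt (show (0:ℝ) ≤ 2 by norm_num)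
  set l := Real.pi / Real.sqrt 2 with hl
  have hlp : 0 < l := by rw [hl]; positivity
  have e : Real.sqrt 2 * l = Real.pi := by rw [hl]; field_simp
  have hcl : 2 * c * l = m := by
    rw [hc, hl]; field_simp; linarith
  let s : ℝ → ℝ := fun x => c * (1 + Real.cos (Real.sqrt 2 * x))
  let s' : ℝ → ℝ := fun x => -(c * Real.sqrt 2 * Real.sin (Real.sqrt 2 * x))
  have hs0 : ∀ x, 0 ≤ s x := fun x =>
    mul_nonneg hcpos.le (by linarith [Real.neg_one_le_cos (Real.sqrt 2 * x)])
  have hρ : ∀ x, ρs x = if |x| ≤ l then s x else 0 := by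
    intro x
    rw [hρs]
    congr 1
    simp only [s]
    rw [Real.cos_sq, show 2 * (x / Real.sqrt 2) = Real.sqrt 2 * x by
      field_simp; rw [h22]; ring]
    ring
  have hnn : ∀ x, 0 ≤ ρs x := by
    intro x; rw [hρ]; split_ifs
    · exact hs0 x
    · exact le_rfl
  have hle : ∀ x, ρs x ≤ s x := by
    intro x; rw [hρ]; split_ifs
    · exact le_rfl
    · exact hs0 x
  have hsd : ∀ x, HasDerivAt s (s' x) x := by
    intro x
    have h1 : HasDerivAt (fun x => Real.sqrt 2 * x) (Real.sqrt 2 * 1) x :=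
      (hasDerivAt_id x).const_mul _
    have h2 := ((h1.cos).const_add 1).const_mul c
    have h3 : HasDerivAt s (c * (-Real.sin (Real.sqrt 2 * x) * (Real.sqrt 2 * 1))) x := h2
    convert h3 using 1
    change -(c * Real.sqrt 2 * Real.sin (Real.sqrt 2 * x)) = _
    ring
  have hbd : ∀ x, |x| = l → s x = 0 ∧ s' x = 0 := by
    intro x hx
    rcases (abs_eq hlp.le).1 hx with h | h
    · simp [s, s', h, e]
    · simp [s, s', h, e]
  have hd : ∀ x, HasDerivAt ρs (if |x| ≤ l then s' x else 0) x := by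
    intro x
    rcases lt_trichotomy |x| l with h | h | h
    · rw [if_pos h.le]
      apply (hsd x).congr_of_eventuallyEq
      filter_upwards [(isOpen_lt continuous_abs continuous_const).mem_nhds h] with y hy
      rw [hρ, if_pos (le_of_lt hy)]
    · obtain ⟨z1, z2⟩ := hbd x h
      rw [if_pos h.le, z2]
      have hx0 : ρs x = 0 := by rw [hρ, if_pos h.le, z1]
      have h1 := (hsd x).isLittleO
      rw [z1, z2] at h1
      rw [hasDerivAt_iff_isLittleO, hx0]
      refine Asymptotics.IsBigO.trans_isLittleO ?_ h1
      apply Asymptotics.IsBigO.of_norm_le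
      intro y
      simp only [sub_zero, smul_zero, Real.norm_eq_abs]
      rw [abs_of_nonneg (hnn y)]
      exact hle y
    · rw [if_neg (not_le.2 h)]
      apply (hasDerivAt_const x (0:ℝ)).congr_of_eventuallyEq
      filter_upwards [(isOpen_lt continuous_const continuous_abs).mem_nhds h] with y hy
      rw [hρ, if_neg (not_le.2 hy)]
  have hderiv : deriv ρs = fun x => if |x| ≤ l then s' x else 0 := funext fun x => (hd x).deriv
  have hsc : Continuous s := by fun_prop
  have hsc' : Continuous s' := by fun_prop
  have hcd : ContDiff ℝ 1 ρs := by
    rw [contDiff_one_iff_deriv]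
    refine ⟨fun x => (hd x).differentiableAt, ?_⟩
    rw [hderiv]
    exact continuous_if_le continuous_abs continuous_const hsc'.continuousOn
      continuousOn_const (fun x hx => (hbd x hx).2)
  have c1 := int_cos l hl
  have c2 := int_cos_sq l hl
  have I1 : ∫ x, ρs x = m := by
    simp_rw [hρ]
    rw [star_integral s l hlp]
    simp only [s]
    rw [intervalIntegral.integral_const_mul, intervalIntegral.integral_add, c1,
      intervalIntegral.integral_const]
    · simp; linarith
    all_goals exact Continuous.intervalIntegrable (by fun_prop) _ _
  have I2 : ∫ x, (ρs x) ^ 2 = 3 * c ^ 2 * l := by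
    have q : ∀ x, (ρs x) ^ 2 = if |x| ≤ l then s x ^ 2 else 0 := by
      intro x; rw [hρ]; split_ifs <;> simp
    simp_rw [q]
    rw [star_integral (fun x => s x ^ 2) l hlp]
    have q2 : ∀ x, s x ^ 2 = c ^ 2 * (1 + 2 * Real.cos (Real.sqrt 2 * x)
        + Real.cos (Real.sqrt 2 * x) ^ 2) := by
      intro x; simp only [s]; ring
    simp_rw [q2]
    rw [intervalIntegral.integral_const_mul, intervalIntegral.integral_add,
      intervalIntegral.integral_add, intervalIntegral.integral_const_mul, c1, c2,
      intervalIntegral.integral_const]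
    · simp; ring
    all_goals exact Continuous.intervalIntegrable (by fun_prop) _ _
  have I3 : ∫ x, (deriv ρs x) ^ 2 = 2 * c ^ 2 * l := by
    have q : ∀ x, (deriv ρs x) ^ 2 = if |x| ≤ l then s' x ^ 2 else 0 := by
      intro x; rw [hderiv]; dsimp only; split_ifs <;> simp
    simp_rw [q]
    rw [star_integral (fun x => s' x ^ 2) l hlp]
    have q2 : ∀ x, s' x ^ 2 = 2 * c ^ 2 * (1 - Real.cos (Real.sqrt 2 * x) ^ 2) := by
      intro x; simp only [s']
      rw [neg_sq, mul_pow, mul_pow, h22, Real.sin_sq]; ring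
    simp_rw [q2]
    rw [intervalIntegral.integral_const_mul, intervalIntegral.integral_sub, c2,
      intervalIntegral.integral_const]
    · simp
    all_goals exact Continuous.intervalIntegrable (by fun_prop) _ _
  have hH : (1 / 8) * (∫ x, (deriv ρs x) ^ 2) - (1 / 4) * (∫ x, (ρs x) ^ 2)
      = -(m ^ 2) / (4 * Real.sqrt 2 * Real.pi) := by
    rw [I2, I3, hc, hl]
    field_simp
    linarith
  refine ⟨hnn, hcd, I1, ?_, hH⟩
  intro ρ ρ' h0 hi hf hg hM
  rw [hH]
  exact main_ineq hg hf h0 hi m hm hM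
end

section
/- Let p ≥ 2 be real, c, v ∈ ℝ, and let I ⊆ ℝ be an open interval. Suppose Q : I → ℂ is twice continuously differentiable and satisfies −c·Q(x) + i·v·Q'(x) + conj(Q(x))·(Q·Q')'(x) + |Q(x)|^{p−2}·Q(x) = 0 for all x ∈ I. Then the two real-valued functions x ↦ (v/2)·|Q(x)|² + Im(|Q(x)|²·conj(Q(x))·Q'(x)) and x ↦ −c·|Q(x)|² + |Q(x)|²·|Q'(x)|² + (2/p)·|Q(x)|^p are constant on I. -/
/-- the two first integrals of the degenerate NLS traveling-wave ODE:
for a solution Q of −cQ + ivQ' + conj(Q)(QQ')' + |Q|^{p−2}Q = 0 on an open interval I,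
the functions (v/2)|Q|² + Im(|Q|²·conj(Q)·Q') and −c|Q|² + |Q|²|Q'|² + (2/p)|Q|^p
are constant on I. -/
theorem stmt_17 (p c v : ℝ) (hp : 2 ≤ p)
    (I : Set ℝ) (hI : IsOpen I) (hIconn : IsPreconnected I)
    (Q Q' Q'' g' : ℝ → ℂ)
    (hd1 : ∀ x ∈ I, HasDerivAt Q (Q' x) x)
    (hd2 : ∀ x ∈ I, HasDerivAt Q' (Q'' x) x)
    (hc2 : ContinuousOn Q'' I)
    (hg : ∀ x ∈ I, HasDerivAt (fun y => Q y * Q' y) (g' x) x)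
    (hODE : ∀ x ∈ I,
      -(c : ℂ) * Q x + Complex.I * (v : ℂ) * Q' x
        + (starRingEnd ℂ) (Q x) * g' x
        + ((‖Q x‖ ^ (p - 2) : ℝ) : ℂ) * Q x = 0) :
    (∃ η : ℝ, ∀ x ∈ I,
      v / 2 * ‖Q x‖ ^ 2
        + (((‖Q x‖ : ℂ)) ^ 2 * (starRingEnd ℂ) (Q x) * Q' x).im = η) ∧
    (∃ κ : ℝ, ∀ x ∈ I,
      -c * ‖Q x‖ ^ 2
        + ‖Q x‖ ^ 2 * ‖Q' x‖ ^ 2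
        + (2 / p) * ‖Q x‖ ^ p = κ) := by
  have key : ∀ f : ℝ → ℝ, (∀ x ∈ I, HasDerivAt f 0 x) → ∃ k : ℝ, ∀ x ∈ I, f x = k := by
    intro f hf
    exact hI.exists_is_const_of_deriv_eq_zero hIconn
      (fun x hx => (hf x hx).differentiableAt.differentiableWithinAt)
      (fun x hx => (hf x hx).deriv)
  have hre : ∀ (f : ℝ → ℂ) (f' : ℂ) (x : ℝ), HasDerivAt f f' x →
      HasDerivAt (fun y => (f y).re) f'.re x := fun f f' x h =>
    (Complex.reCLM.hasFDerivAt.comp_hasDerivAt x h)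
  have him : ∀ (f : ℝ → ℂ) (f' : ℂ) (x : ℝ), HasDerivAt f f' x →
      HasDerivAt (fun y => (f y).im) f'.im x := fun f f' x h =>
    (Complex.imCLM.hasFDerivAt.comp_hasDerivAt x h)
  have hns : ∀ z : ℂ, ‖z‖ ^ 2 = z.re ^ 2 + z.im ^ 2 := by
    intro z
    rw [← Complex.normSq_eq_norm_sq, Complex.normSq_apply]; ring
  have hrp : ∀ (z : ℂ) (q : ℝ), ‖z‖ ^ q = (z.re ^ 2 + z.im ^ 2) ^ (q / 2) := by
    intro z q
    rw [← hns, ← Real.rpow_natCast, ← Real.rpow_mul (norm_nonneg z)]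
    congr 1; push_cast; ring
  have hgx : ∀ x ∈ I, g' x = Q' x * Q' x + Q x * Q'' x := fun x hx =>
    (hg x hx).unique ((hd1 x hx).mul (hd2 x hx))
  constructor
  · apply key
    intro x hx
    have a := hre _ _ _ (hd1 x hx)
    have b := him _ _ _ (hd1 x hx)
    have a1 := hre _ _ _ (hd2 x hx)
    have b1 := him _ _ _ (hd2 x hx)
    have e : (fun x => v / 2 * ‖Q x‖ ^ 2
        + (((‖Q x‖ : ℂ)) ^ 2 * (starRingEnd ℂ) (Q x) * Q' x).im) =
        fun x => v / 2 * ((Q x).re ^ 2 + (Q x).im ^ 2) + ((Q x).re ^ 2 + (Q x).im ^ 2) *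
          ((Q x).re * (Q' x).im - (Q x).im * (Q' x).re) := by
      funext y
      rw [← Complex.ofReal_pow, hns, mul_assoc, Complex.im_ofReal_mul]
      simp only [Complex.mul_im, Complex.conj_re, Complex.conj_im]
      ring
    rw [e]
    have n := (a.pow 2).add (b.pow 2)
    refine ((n.const_mul (v / 2)).add (n.mul ((a.mul b1).sub (b.mul a1)))).congr_deriv ?_
    have o := hODE x hx
    rw [hgx x hx] at o
    have o1 := congrArg Complex.re o
    have o2 := congrArg Complex.im o
    simp at o1 o2 ⊢
    linear_combination (Q x).re * o2 - (Q x).im * o1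
  · apply key
    intro x hx
    have a := hre _ _ _ (hd1 x hx)
    have b := him _ _ _ (hd1 x hx)
    have a1 := hre _ _ _ (hd2 x hx)
    have b1 := him _ _ _ (hd2 x hx)
    simp only [hns, hrp]
    have n := (a.pow 2).add (b.pow 2)
    have n1 := (a1.pow 2).add (b1.pow 2)
    have r := n.rpow_const (p := p / 2) (Or.inr (by linarith))
    refine (((n.const_mul (-c)).add (n.mul n1)).add (r.const_mul (2 / p))).congr_deriv ?_
    have o := hODE x hx
    rw [hgx x hx, hrp, show (p - 2) / 2 = p / 2 - 1 by ring] at o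
    have o1 := congrArg Complex.re o
    have o2 := congrArg Complex.im o
    have hp0 : p ≠ 0 := by linarith
    simp only [Pi.add_apply, Pi.pow_apply]
    generalize ((Q x).re ^ 2 + (Q x).im ^ 2) ^ (p / 2 - 1) = R at *
    simp at o1 o2 ⊢
    field_simp
    linear_combination 2 * (Q' x).re * o1 + 2 * (Q' x).im * o2
end

section
/- Let p ≥ 2 be real, c, v ∈ ℝ, and let I ⊆ ℝ be an open interval. Suppose φ : I → ℝ is twice continuously differentiable, positive, and satisfies c·φ(x) = φ(x)·(φ·φ')'(x) + φ(x)^{p−1} on I, and suppose θ : I → ℝ is differentiable with θ'(x) = −v/(2·φ(x)²) on I. Then Q(x) = φ(x)·e^{iθ(x)} satisfies the degenerate NLS traveling-wave ODE −c·Q + i·v·Q' + conj(Q)·(Q·Q')' + |Q|^{p−2}·Q = 0 on I; moreover, pointwise on I one has Im(conj(Q(x))·Q'(x)) = −v/2 and |Q(x)·Q'(x)|² = (φ(x)·φ'(x))² + v²/4. -/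
/-- every real compacton profile φ of the real traveling-wave ODE
cφ = φ(φφ')' + φ^{p−1} upgrades, via a phase θ with θ' = −v/(2φ²), to a complex
solution Q = φe^{iθ} of the degenerate NLS traveling-wave ODE
−cQ + ivQ' + conj(Q)(QQ')' + |Q|^{p−2}Q = 0, with Im(conj(Q)Q') = −v/2 and
|QQ'|² = (φφ')² + v²/4 pointwise. -/
theorem stmt_18 (p c v : ℝ) (hp : 2 ≤ p)
    (I : Set ℝ) (hI : IsOpen I)
    (φ φ' φ'' g' θ : ℝ → ℝ)
    (hd1 : ∀ x ∈ I, HasDerivAt φ (φ' x) x)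
    (hd2 : ∀ x ∈ I, HasDerivAt φ' (φ'' x) x)
    (hc2 : ContinuousOn φ'' I)
    (hg : ∀ x ∈ I, HasDerivAt (fun y => φ y * φ' y) (g' x) x)
    (hpos : ∀ x ∈ I, 0 < φ x)
    (hODE : ∀ x ∈ I, c * φ x = φ x * g' x + φ x ^ (p - 1))
    (hθ : ∀ x ∈ I, HasDerivAt θ (-v / (2 * (φ x) ^ 2)) x)
    (Q : ℝ → ℂ)
    (hQ : ∀ x, Q x = (φ x : ℂ) * Complex.exp ((θ x : ℂ) * Complex.I)) :
    ∀ x ∈ I,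
      (-(c : ℂ) * Q x + Complex.I * (v : ℂ) * deriv Q x
        + (starRingEnd ℂ) (Q x) * deriv (fun y => Q y * deriv Q y) x
        + ((‖Q x‖ ^ (p - 2) : ℝ) : ℂ) * Q x = 0) ∧
      ((starRingEnd ℂ) (Q x) * deriv Q x).im = -v / 2 ∧
      ‖Q x * deriv Q x‖ ^ 2 = (φ x * φ' x) ^ 2 + v ^ 2 / 4 := by
  have hE : ∀ x ∈ I, HasDerivAt (fun y => Complex.exp ((θ y : ℂ) * Complex.I))
      (Complex.exp ((θ x : ℂ) * Complex.I) * (((-v / (2 * (φ x) ^ 2) : ℝ) : ℂ) * Complex.I)) x :=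
    fun x hx => ((hθ x hx).ofReal_comp.mul_const Complex.I).cexp
  have hQf : Q = fun y => (φ y : ℂ) * Complex.exp ((θ y : ℂ) * Complex.I) := funext hQ
  have hQd : ∀ x ∈ I, deriv Q x =
      ((φ' x : ℂ) - Complex.I * v / (2 * φ x)) * Complex.exp ((θ x : ℂ) * Complex.I) := by
    intro x hx
    have h0 : (φ x : ℂ) ≠ 0 := by exact_mod_cast (hpos x hx).ne'
    rw [hQf]
    refine ((hd1 x hx).ofReal_comp.mul (hE x hx)).deriv.trans ?_
    push_cast
    field_simp
    ring
  have hQQ : ∀ x ∈ I, Q x * deriv Q x =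
      (((φ x * φ' x : ℝ) : ℂ) - Complex.I * v / 2) *
        (Complex.exp ((θ x : ℂ) * Complex.I) * Complex.exp ((θ x : ℂ) * Complex.I)) := by
    intro x hx
    have h0 : (φ x : ℂ) ≠ 0 := by exact_mod_cast (hpos x hx).ne'
    rw [hQd x hx, hQ x]
    push_cast
    field_simp
  intro x hx
  have h0r := hpos x hx
  have h0 : (φ x : ℂ) ≠ 0 := by exact_mod_cast h0r.ne'
  have hD := (((hg x hx).ofReal_comp.sub_const (Complex.I * v / 2)).mul
    ((hE x hx).mul (hE x hx))).congr_of_eventuallyEq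
    (f₁ := fun y => Q y * deriv Q y)
    (by filter_upwards [hI.mem_nhds hx] with y hy
        exact hQQ y hy)
  have hnE : ‖Complex.exp ((θ x : ℂ) * Complex.I)‖ = 1 := Complex.norm_exp_ofReal_mul_I _
  have hcE : (starRingEnd ℂ) (Complex.exp ((θ x : ℂ) * Complex.I)) *
      Complex.exp ((θ x : ℂ) * Complex.I) = 1 := by
    rw [mul_comm, Complex.mul_conj, Complex.normSq_eq_norm_sq, hnE]; simp
  have hnQ : ‖Q x‖ = φ x := by
    rw [hQ x, norm_mul, hnE, mul_one, Complex.norm_real, Real.norm_of_nonneg h0r.le]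
  have hpw : φ x ^ (p - 1) = φ x ^ (p - 2) * φ x := by
    rw [← Real.rpow_add_one h0r.ne']; congr 1; ring
  have hode : (c : ℂ) * φ x = φ x * g' x + ((φ x ^ (p - 2) : ℝ) : ℂ) * φ x := by
    have := hODE x hx
    rw [hpw] at this
    exact_mod_cast this
  refine ⟨?_, ?_, ?_⟩
  · rw [hD.deriv, hnQ, hQd x hx, hQ x, map_mul, Complex.conj_ofReal]
    simp only [Pi.mul_apply]
    generalize ((φ x ^ (p - 2) : ℝ) : ℂ) = P at *
    generalize Complex.exp ((θ x : ℂ) * Complex.I) = E at *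
    generalize (starRingEnd ℂ) E = F at *
    have hI2 : Complex.I ^ 2 = -1 := Complex.I_sq
    push_cast
    have key : (φ x : ℂ) * F * ((g' x : ℂ) * (E * E) + ((φ x : ℂ) * φ' x - Complex.I * v / 2) *
        (E * (-(v : ℂ) / (2 * (φ x : ℂ) ^ 2) * Complex.I) * E +
          E * (E * (-(v : ℂ) / (2 * (φ x : ℂ) ^ 2) * Complex.I)))) =
        (F * E) * E * ((φ x : ℂ) * g' x - Complex.I * v * φ' x + Complex.I ^ 2 * v ^ 2 / (2 * φ x)) := by
      field_simp
      ring
    rw [key, hcE]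
    linear_combination (-E) * hode
  · have : (starRingEnd ℂ) (Q x) * deriv Q x = ((φ x * φ' x : ℝ) : ℂ) + ((-v / 2 : ℝ) : ℂ) * Complex.I := by
      rw [hQd x hx, hQ x, map_mul, Complex.conj_ofReal]
      have : (φ x : ℂ) * ((φ' x : ℂ) - Complex.I * v / (2 * φ x)) = φ x * φ' x - Complex.I * v / 2 := by
        field_simp
      push_cast
      linear_combination ((φ x : ℂ) * ((φ' x : ℂ) - Complex.I * v / (2 * φ x))) * hcE + this
    rw [this, Complex.add_im, Complex.ofReal_im, Complex.im_ofReal_mul, Complex.I_im]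
    ring
  · rw [hQQ x hx, norm_mul, norm_mul, hnE, mul_one, mul_one, ← Complex.normSq_eq_norm_sq]
    have : ((φ x * φ' x : ℝ) : ℂ) - Complex.I * v / 2 = ((φ x * φ' x : ℝ) : ℂ) + ((-v / 2 : ℝ) : ℂ) * Complex.I := by
      push_cast; ring
    rw [this, Complex.normSq_add_mul_I]
    ring
end

section
/- Let c ∈ ℝ and Z > 0, and let I ⊆ ℝ be an open interval on which c + Z·cos(√2·x) > 0; set φ(x) = √(c + Z·cos(√2·x)) on I. Define the linearized operator (𝓛_φ u)(x) = −φ(x)·((φ·u)''(x) + 2·φ(x)·u(x)) for twice continuously differentiable u : I → ℝ. Then on I: (i) 𝓛_φ φ = −2c·φ, and (ii) 𝓛_φ φ' = 0. -/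
/-- for the linearized operator 𝓛_φ u = −φ·((φu)'' + 2φu) around a
p = 4 compacton profile φ(x) = √(c + Z·cos(√2 x)) on an open interval I where the
radicand is positive: (i) 𝓛_φ φ = −2c·φ and (ii) 𝓛_φ φ' = 0 on I. -/
theorem stmt_19 (c Z : ℝ) (hZ : 0 < Z)
    (I : Set ℝ) (hI : IsOpen I) (hIconn : IsPreconnected I)
    (hpos : ∀ x ∈ I, 0 < c + Z * Real.cos (Real.sqrt 2 * x))
    (φ : ℝ → ℝ)
    (hφ : ∀ x, φ x = Real.sqrt (c + Z * Real.cos (Real.sqrt 2 * x))) :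
    (∀ x ∈ I,
      -φ x * (deriv (deriv (fun y => φ y * φ y)) x + 2 * φ x * φ x)
        = -2 * c * φ x) ∧
    (∀ x ∈ I,
      -φ x * (deriv (deriv (fun y => φ y * deriv φ y)) x + 2 * φ x * deriv φ x)
        = 0) := by
  have hc : ∀ y : ℝ, HasDerivAt (fun y => Real.cos (Real.sqrt 2 * y))
      (-(Real.sqrt 2 * Real.sin (Real.sqrt 2 * y))) y := by
    intro y
    have h := ((hasDerivAt_id y).const_mul (Real.sqrt 2)).cos
    simp only [id, mul_one] at h
    convert h using 1
    ring
  have hs : ∀ y : ℝ, HasDerivAt (fun y => Real.sin (Real.sqrt 2 * y))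
      (Real.sqrt 2 * Real.cos (Real.sqrt 2 * y)) y := by
    intro y
    have h := ((hasDerivAt_id y).const_mul (Real.sqrt 2)).sin
    simp only [id, mul_one] at h
    convert h using 1
    ring
  have h2 : Real.sqrt 2 * Real.sqrt 2 = 2 := Real.mul_self_sqrt (by norm_num)
  have hg : ∀ y : ℝ, HasDerivAt (fun y => c + Z * Real.cos (Real.sqrt 2 * y))
      (Z * (-(Real.sqrt 2 * Real.sin (Real.sqrt 2 * y)))) y := fun y =>
    ((hc y).const_mul Z).const_add c
  have hsq : ∀ y ∈ I, φ y * φ y = c + Z * Real.cos (Real.sqrt 2 * y) := by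
    intro y hy
    rw [hφ y]
    exact Real.mul_self_sqrt (hpos y hy).le
  have hfun : φ = fun x => Real.sqrt (c + Z * Real.cos (Real.sqrt 2 * x)) := funext hφ
  have hprod : ∀ y ∈ I, φ y * deriv φ y
      = (-(Z * Real.sqrt 2) / 2) * Real.sin (Real.sqrt 2 * y) := by
    intro y hy
    have hd := ((hg y).sqrt (hpos y hy).ne').deriv
    rw [← hfun, ← hφ y] at hd
    have hp : φ y ≠ 0 := by
      rw [hφ y]
      exact (Real.sqrt_pos.mpr (hpos y hy)).ne'
    rw [hd]
    field_simp
  constructor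
  · intro x hx
    have e : (fun y => φ y * φ y) =ᶠ[nhds x]
        fun y => c + Z * Real.cos (Real.sqrt 2 * y) :=
      Filter.eventuallyEq_of_mem (hI.mem_nhds hx) hsq
    have d1 : deriv (fun y => c + Z * Real.cos (Real.sqrt 2 * y))
        = fun y => Z * (-(Real.sqrt 2 * Real.sin (Real.sqrt 2 * y))) :=
      funext fun y => (hg y).deriv
    rw [e.deriv.deriv_eq, d1, ((((hs x).const_mul (Real.sqrt 2)).fun_neg).const_mul Z).deriv]
    linear_combination (-2 * φ x) * hsq x hx
      + φ x * Z * Real.cos (Real.sqrt 2 * x) * h2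
  · intro x hx
    have e : (fun y => φ y * deriv φ y) =ᶠ[nhds x]
        fun y => (-(Z * Real.sqrt 2) / 2) * Real.sin (Real.sqrt 2 * y) :=
      Filter.eventuallyEq_of_mem (hI.mem_nhds hx) hprod
    have d1 : deriv (fun y => (-(Z * Real.sqrt 2) / 2) * Real.sin (Real.sqrt 2 * y))
        = fun y => (-(Z * Real.sqrt 2) / 2) * (Real.sqrt 2 * Real.cos (Real.sqrt 2 * y)) :=
      funext fun y => ((hs y).const_mul _).deriv
    rw [e.deriv.deriv_eq, d1, (((hc x).const_mul (Real.sqrt 2)).const_mul _).deriv]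
    linear_combination (-2 * φ x) * hprod x hx
      - φ x * (Z * Real.sqrt 2 / 2) * Real.sin (Real.sqrt 2 * x) * h2
end
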